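/- For all G, H ∈ {L, L₁, L₂} (the three minimal 8-vertex Lemke graphs), the pebbling number of the Cartesian product satisfies π(G□H) ≤ 85; in particular π(L□L) ≤ 85. -/

import Mathlib

open SimpleGraph Finset

/-- A single pebbling move on `G`: remove two pebbles from a vertex `v` with at least two
pebbles and add one pebble to an adjacent vertex `w`. -/
def PebblingMove {V : Type*} (G : SimpleGraph V) (c c' : V → ℕ) : Prop :=
  ∃ v w, G.Adj v w ∧ 2 ≤ c v ∧ c' v = c v - 2 ∧ c' w = c w + 1 ∧
    ∀ u, u ≠ v → u ≠ w → c' u = c u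

/-- Some finite sequence of pebbling moves starting from `c` places at least `t` pebbles
on the vertex `r`. -/
def NSolvable {V : Type*} (G : SimpleGraph V) (c : V → ℕ) (r : V) (t : ℕ) : Prop :=
  ∃ c', Relation.ReflTransGen (PebblingMove G) c c' ∧ t ≤ c' r

/-- A configuration `c` is `r`-solvable. -/
def Solvable {V : Type*} (G : SimpleGraph V) (c : V → ℕ) (r : V) : Prop :=
  NSolvable G c r 1

/-- The pebbling number `π(G)`: least `k` such that every configuration of size `k` is
`r`-solvable for every root `r`. -/
noncomputable def pebblingNumber {V : Type*} (G : SimpleGraph V) [Fintype V] : ℕ :=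
  sInf {k | ∀ c : V → ℕ, (∑ v, c v) = k → ∀ r, Solvable G c r}

/-- The 2-pebbling number `π₂(G, s)`: least `m` such that for every root `r`, every
configuration of size at least `m` with support of size exactly `s` can place two pebbles
on `r`. -/
noncomputable def twoPebblingNumber {V : Type*} (G : SimpleGraph V) [Fintype V] (s : ℕ) : ℕ :=
  sInf {m | ∀ (r : V) (c : V → ℕ), m ≤ ∑ v, c v →
    (Finset.univ.filter fun v => 1 ≤ c v).card = s → NSolvable G c r 2}

/-- The Lemke graph `L` on vertices `v1, …, v8` (as `0, …, 7`). -/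
def lemkeL : SimpleGraph (Fin 8) :=
  SimpleGraph.fromRel fun a b =>
    (a, b) ∈ ([(0, 1), (0, 2), (1, 3), (2, 4), (2, 5), (2, 6), (3, 4), (3, 5), (3, 6),
      (3, 7), (4, 7), (5, 7), (6, 7)] : List (Fin 8 × Fin 8))

/-- The minimal Lemke graph `L₁`. -/
def lemkeL1 : SimpleGraph (Fin 8) :=
  SimpleGraph.fromRel fun a b =>
    (a, b) ∈ ([(0, 1), (0, 2), (1, 2), (1, 3), (2, 4), (2, 5), (2, 6), (3, 4), (3, 7),
      (4, 7), (5, 7), (6, 7)] : List (Fin 8 × Fin 8))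

/-- The minimal Lemke graph `L₂`. -/
def lemkeL2 : SimpleGraph (Fin 8) :=
  SimpleGraph.fromRel fun a b =>
    (a, b) ∈ ([(0, 1), (0, 2), (1, 3), (2, 4), (2, 5), (2, 6), (3, 4), (3, 6), (3, 7),
      (4, 5), (4, 7), (5, 6), (5, 7), (6, 7)] : List (Fin 8 × Fin 8))

/-
Group the pebbles of a configuration on `G □ H` by the fibers `{x} × H`. If `π(H, h) ≤ p`, a fiber
with `n` pebbles can deliver `⌊n / p⌋` tokens to `(x, h)`, and these can be moved in the layer
`G × {h}`. Moreover `p` bounds the order of `H`, so a fiber with more than `p` pebbles has two of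
them on one vertex and can ship a pebble to the fiber over any neighbour of `x`. A plan consisting
of shipments followed by token moves succeeds for all fiber sizes `n` satisfying certain linear
inequalities, whatever `H` is. For `p = 8` and `∑ n = 85` some plan always succeeds: for each token
vector `⌊n / 8⌋` which does not win by itself, a Farkas certificate on the corresponding box shows
that the failures of suitable plans are incompatible with `∑ n = 85`. Plans and certificates were
found by a computer search; as the three Lemke graphs have a large common spanning subgraph, eight
rooted graphs cover all their roots.
-/

section Configurations

variable {V W : Type*} {G : SimpleGraph V} {H : SimpleGraph W} {c c' d : V → ℕ} {r : V} {s t : ℕ}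

theorem PebblingMove.add_right (h : PebblingMove G c c') (d : V → ℕ) :
    PebblingMove G (c + d) (c' + d) := by
  obtain ⟨v, w, hvw, hv, hv', hw', hu⟩ := h
  refine ⟨v, w, hvw, ?_, ?_, ?_, fun u huv huw => ?_⟩ <;> simp only [Pi.add_apply]
  · omega
  · omega
  · omega
  · rw [hu u huv huw]

theorem PebblingMove.single [DecidableEq V] {v w : V} (hvw : G.Adj v w) :
    PebblingMove G (Pi.single v 2) (Pi.single w 1) := by
  refine ⟨v, w, hvw, ?_, ?_, ?_, fun u huv huw => ?_⟩ <;>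
    simp [hvw.ne, hvw.ne', *]

theorem PebblingMove.extend (φ : Copy G H) (h : PebblingMove G c c') (d : W → ℕ) :
    PebblingMove H (Function.extend φ c d) (Function.extend φ c' d) := by
  obtain ⟨v, w, hvw, hv, hv', hw', hu⟩ := h
  have hφ : ∀ b a, Function.extend φ b d (φ a) = b a := fun b => φ.injective.extend_apply b d
  refine ⟨φ v, φ w, φ.toHom.map_adj hvw, ?_, ?_, ?_, fun u huv huw => ?_⟩
  · rwa [hφ]
  · rwa [hφ, hφ]
  · rwa [hφ, hφ]
  · by_cases hmem : ∃ a, φ a = u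
    · obtain ⟨a, rfl⟩ := hmem
      rw [hφ, hφ, hu a (ne_of_apply_ne φ huv) (ne_of_apply_ne φ huw)]
    · rw [Function.extend_apply' _ _ _ hmem, Function.extend_apply' _ _ _ hmem]

theorem reflTransGen_add_right (h : Relation.ReflTransGen (PebblingMove G) c c') (d : V → ℕ) :
    Relation.ReflTransGen (PebblingMove G) (c + d) (c' + d) :=
  h.lift (· + d) fun _ _ hm => hm.add_right d

theorem reflTransGen_extend (φ : Copy G H) (h : Relation.ReflTransGen (PebblingMove G) c c')
    (d : W → ℕ) :
    Relation.ReflTransGen (PebblingMove H) (Function.extend φ c d) (Function.extend φ c' d) :=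
  h.lift (Function.extend φ · d) fun _ _ hm => hm.extend φ d

theorem NSolvable.of_reflTransGen (hcc' : Relation.ReflTransGen (PebblingMove G) c c')
    (h : NSolvable G c' r t) : NSolvable G c r t :=
  let ⟨b, hb, hbr⟩ := h
  ⟨b, hcc'.trans hb, hbr⟩

theorem NSolvable.mono (h : NSolvable G c r t) (hcd : c ≤ d) : NSolvable G d r t := by
  obtain ⟨c', hcc', hr⟩ := h
  have hd := reflTransGen_add_right hcc' (d - c)
  rw [add_tsub_cancel_of_le hcd] at hd
  exact ⟨_, hd, hr.trans (Nat.le_add_right _ _)⟩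

theorem NSolvable.add (hc : NSolvable G c r s) (hd : NSolvable G d r t) :
    NSolvable G (c + d) r (s + t) := by
  obtain ⟨c', hcc', hcr⟩ := hc
  obtain ⟨d', hdd', hdr⟩ := hd
  have hd := reflTransGen_add_right hdd' c'
  rw [add_comm d, add_comm d'] at hd
  exact ⟨c' + d', (reflTransGen_add_right hcc' d).trans hd, Nat.add_le_add hcr hdr⟩

theorem extend_comp_self (φ : Copy G H) (b : W → ℕ) : Function.extend φ (b ∘ φ) b = b := by
  funext w
  by_cases hw : ∃ v, φ v = w
  · obtain ⟨v, rfl⟩ := hw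
    exact φ.injective.extend_apply _ _ v
  · exact Function.extend_apply' _ _ _ hw

theorem NSolvable.of_comp_copy {b : W → ℕ} (φ : Copy G H) (h : NSolvable G (b ∘ φ) r t) :
    NSolvable H b (φ r) t := by
  obtain ⟨c', hc', hr⟩ := h
  have hb := reflTransGen_extend φ hc' b
  rw [extend_comp_self] at hb
  exact ⟨_, hb, hr.trans_eq (φ.injective.extend_apply c' b r).symm⟩

theorem solvable_single [DecidableEq V] (r : V) : Solvable G (Pi.single r 1) r :=
  ⟨_, .refl, by simp⟩

end Configurations

section PebblingBound

variable {V W : Type*} [Fintype V] [Fintype W] {G : SimpleGraph V} {H : SimpleGraph W} {r : V}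
  {k : ℕ}

/-- The rooted pebbling number satisfies `π(G, r) ≤ k`. -/
def PebblingBound (G : SimpleGraph V) (r : V) (k : ℕ) : Prop :=
  ∀ c : V → ℕ, ∑ v, c v = k → Solvable G c r

theorem exists_le_sum_eq {c : V → ℕ} (hk : k ≤ ∑ v, c v) : ∃ a ≤ c, ∑ v, a v = k := by
  obtain ⟨a, hac, hak⟩ := Finsupp.exists_le_degree_eq (Finsupp.equivFunOnFinite.symm c) k
    (by rwa [Finsupp.degree_eq_sum])
  exact ⟨a, hac, by rw [← hak, Finsupp.degree_eq_sum]⟩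

theorem PebblingBound.nsolvable (h : PebblingBound G r k) {t : ℕ} {c : V → ℕ}
    (hc : k * t ≤ ∑ v, c v) : NSolvable G c r t := by
  induction t generalizing c with
  | zero => exact ⟨c, .refl, Nat.zero_le _⟩
  | succ t ih =>
    rw [Nat.mul_succ] at hc
    obtain ⟨a, hac, hak⟩ := exists_le_sum_eq (le_of_add_le_right hc)
    have hsum : ∑ v, (c - a) v + ∑ v, a v = ∑ v, c v := by
      rw [← Finset.sum_add_distrib]
      exact Finset.sum_congr rfl fun v _ => Nat.sub_add_cancel (hac v)
    rw [← tsub_add_cancel_of_le hac]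
    exact (ih (by omega)).add (h a hak)

theorem PebblingBound.copy (h : PebblingBound G r k) (φ : Copy G H)
    (hcard : Fintype.card V = Fintype.card W) : PebblingBound H (φ r) k := by
  intro c hc
  have hφ : Function.Bijective φ :=
    (Fintype.bijective_iff_injective_and_card φ).2 ⟨φ.injective, hcard⟩
  exact .of_comp_copy φ (h _ ((hφ.sum_comp c).trans hc))

/-- No move is available when every vertex carries at most one pebble, so `k` single pebbles
off the root are not solvable. -/
theorem PebblingBound.card_le (h : PebblingBound G r k) : Fintype.card V ≤ k := by
  classical
  by_contra! hk
  have hsum : k ≤ ∑ v, if v = r then 0 else 1 := by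
    rw [Finset.sum_ite, Finset.sum_const_zero, zero_add, Finset.sum_const, Finset.filter_ne',
      Finset.card_erase_of_mem (Finset.mem_univ r), Finset.card_univ, smul_eq_mul, mul_one]
    omega
  obtain ⟨a, ha, hak⟩ := exists_le_sum_eq hsum
  have ha' (v : V) : a v ≤ if v = r then 0 else 1 := ha v
  obtain ⟨a', haa', har⟩ := h a hak
  rcases haa'.cases_head with rfl | ⟨b, ⟨v, -, -, hv, -⟩, -⟩
  · exact absurd (har.trans (ha' r)) (by simp)
  · have := hv.trans (ha' v)
    split_ifs at this <;> omega

end PebblingBound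

namespace FiberPebbling

section Pull

variable {V : Type*} [DecidableEq V] {G : SimpleGraph V} {r v : V} {d t : V → ℕ} {e : V × V}
  {k : ℕ}

/-- Undoing `k` pebbling moves from `e.1` to `e.2`: if `pull k e d` pebbles are available, then
these moves leave at least `d`. The subtraction is truncated, so a pull may overshoot the demand
at `e.2`. -/
def pull (k : ℕ) (e : V × V) (d : V → ℕ) : V → ℕ := fun v =>
  if v = e.2 then d v - k else if v = e.1 then d v + 2 * k else d v

theorem pull_zero (e : V × V) (d : V → ℕ) : pull 0 e d = d := by
  funext v
  simp [pull]

theorem pull_succ (k : ℕ) (e : V × V) (d : V → ℕ) :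
    pull (k + 1) e d = pull 1 e (pull k e d) := by
  funext v
  simp only [pull]
  split_ifs <;> grind

theorem le_pull (hv : v ≠ e.2) : d v ≤ pull k e d v := by
  simp only [pull, if_neg hv]
  split_ifs <;> omega

theorem le_foldl_pull {es : List (V × V)} (hv : ∀ e ∈ es, v ≠ e.2) :
    d v ≤ es.foldl (fun d e => pull 1 e d) d v := by
  induction es generalizing d with
  | nil => exact le_rfl
  | cons e es ih =>
    rw [List.forall_mem_cons] at hv
    exact (le_pull hv.1).trans (ih hv.2)

theorem solvable_pull (ht : Solvable G t r) (he : G.Adj e.1 e.2) :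
    Solvable G (pull 1 e t) r := by
  let rest : V → ℕ := fun v => if v = e.2 then t v - 1 else t v
  have hpull : pull 1 e t = Pi.single e.1 2 + rest := by
    funext v
    by_cases h₁ : v = e.1 <;> by_cases h₂ : v = e.2 <;>
      simp_all [pull, rest, add_comm]
  have hle : t ≤ Pi.single e.2 1 + rest := fun v => by
    by_cases h₂ : v = e.2 <;> simp_all [rest]
    omega
  rw [hpull]
  exact .of_reflTransGen (.single ((PebblingMove.single he).add_right rest)) (ht.mono hle)

theorem solvable_foldl_pull {es : List (V × V)} (hes : ∀ e ∈ es, G.Adj e.1 e.2)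
    (ht : Solvable G t r) : Solvable G (es.foldl (fun t e => pull 1 e t) t) r := by
  induction es generalizing t with
  | nil => exact ht
  | cons e es ih =>
    rw [List.forall_mem_cons] at hes
    exact ih hes.2 (solvable_pull ht hes.1)

end Pull

section FiberSuffices

variable {X Y : Type*} [Fintype Y] {G : SimpleGraph X} {H : SimpleGraph Y}
  {r : X} {h : Y} {d d' t : X → ℕ} {e : X × X} {p : ℕ}

/-- In `G □ H` the root `(r, h)` can be reached from every configuration having at least `d x`
pebbles on each fiber `{x} × H`. -/
def FiberSuffices (G : SimpleGraph X) (H : SimpleGraph Y) (r : X) (h : Y) (d : X → ℕ) : Prop :=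
  ∀ c : X × Y → ℕ, (∀ x, d x ≤ ∑ y, c (x, y)) → Solvable (G □ H) c (r, h)

theorem FiberSuffices.mono (hd : FiberSuffices G H r h d) (hdd' : d ≤ d') :
    FiberSuffices G H r h d' :=
  fun c hc => hd c fun x => (hdd' x).trans (hc x)

theorem exists_deliver [Finite X] (hH : PebblingBound H h p) {c : X × Y → ℕ}
    (hc : ∀ x, p * t x ≤ ∑ y, c (x, y)) :
    ∃ c', Relation.ReflTransGen (PebblingMove (G □ H)) c c' ∧ ∀ x, t x ≤ c' (x, h) := by
  suffices ∀ s : Finset X, ∃ c', Relation.ReflTransGen (PebblingMove (G □ H)) c c' ∧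
      (∀ x ∈ s, t x ≤ c' (x, h)) ∧ ∀ x ∉ s, ∀ y, c' (x, y) = c (x, y) by
    cases nonempty_fintype X
    obtain ⟨c', hcc', hc', -⟩ := this Finset.univ
    exact ⟨c', hcc', fun x => hc' x (Finset.mem_univ x)⟩
  classical
  intro s
  induction s using Finset.induction_on with
  | empty => exact ⟨c, .refl, by simp, by simp⟩
  | insert x s hx ih =>
    obtain ⟨c', hcc', hs, hns⟩ := ih
    let φ := (G.boxProdRight H x).toCopy
    have hfiber : p * t x ≤ ∑ y, (c' ∘ φ) y :=
      (hc x).trans_eq (Finset.sum_congr rfl fun y _ => (hns x hx y).symm)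
    obtain ⟨a, ha, hah⟩ := hH.nsolvable hfiber
    have hreach := reflTransGen_extend φ ha c'
    rw [extend_comp_self] at hreach
    have hother (x' : X) (hx' : x' ≠ x) (y : Y) :
        Function.extend φ a c' (x', y) = c' (x', y) :=
      Function.extend_apply' _ _ _ fun ⟨_, hy⟩ => hx' (congrArg Prod.fst hy).symm
    refine ⟨_, hcc'.trans hreach, fun x' hx' => ?_, fun x' hx' y => ?_⟩
    · by_cases hxx : x' = x
      · subst hxx
        exact hah.trans_eq (φ.injective.extend_apply a c' h).symm
      · rw [hother x' hxx]
        exact hs x' (Finset.mem_of_mem_insert_of_ne hx' hxx)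
    · rw [Finset.mem_insert, not_or] at hx'
      rw [hother x' hx'.1, hns x' hx'.2]

theorem FiberSuffices.of_solvable [Finite X] (hH : PebblingBound H h p) (ht : Solvable G t r) :
    FiberSuffices G H r h fun x => p * t x := by
  intro c hc
  obtain ⟨c', hcc', hc'⟩ := exists_deliver (G := G) hH hc
  exact .of_reflTransGen hcc'
    (.of_comp_copy (G.boxProdLeft H h).toCopy (NSolvable.mono ht hc'))

theorem sum_single_fiber [DecidableEq X] [DecidableEq Y] (x u : X) (y : Y) (k : ℕ) :
    ∑ y', (Pi.single (x, y) k : X × Y → ℕ) (u, y') = if u = x then k else 0 := by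
  simp only [Pi.single_apply, Prod.mk.injEq]
  split_ifs with hu <;> simp [hu]

theorem fiberSuffices_pull_one [DecidableEq X] (hd : FiberSuffices G H r h d)
    (he : G.Adj e.1 e.2) (hcard : Fintype.card Y ≤ d e.1 + 1) :
    FiberSuffices G H r h (pull 1 e d) := by
  classical
  intro c hc
  obtain ⟨y, -, hy⟩ : ∃ y ∈ Finset.univ, 1 < c (e.1, y) := by
    refine Finset.exists_lt_of_sum_lt (lt_of_lt_of_le ?_ (hc e.1))
    simp only [pull, if_neg he.ne, if_pos, Finset.sum_const, Finset.card_univ, smul_eq_mul]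
    omega
  let rest := c - Pi.single (e.1, y) 2
  have hrest : Pi.single (e.1, y) 2 + rest = c := add_tsub_cancel_of_le fun q => by
    by_cases hq : q = (e.1, y) <;> simp_all
    omega
  have hmove : PebblingMove (G □ H) c (Pi.single (e.2, y) 1 + rest) := by
    conv_lhs => rw [← hrest]
    exact (PebblingMove.single (boxProd_adj_left.2 he)).add_right rest
  refine .of_reflTransGen (.single hmove) (hd _ fun u => ?_)
  have hu := hc u
  rw [← hrest] at hu
  simp only [Pi.add_apply, Finset.sum_add_distrib, sum_single_fiber, pull] at hu ⊢
  have := he.ne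
  split_ifs at hu ⊢ <;> grind

theorem fiberSuffices_pull [DecidableEq X] (hd : FiberSuffices G H r h d)
    (he : G.Adj e.1 e.2) (hcard : Fintype.card Y ≤ d e.1 + 1) (k : ℕ) :
    FiberSuffices G H r h (pull k e d) := by
  induction k with
  | zero => rwa [pull_zero]
  | succ k ih =>
    rw [pull_succ]
    exact fiberSuffices_pull_one ih he (hcard.trans (Nat.succ_le_succ (le_pull he.ne)))

theorem fiberSuffices_foldl_pull [DecidableEq X] {es : List (X × X)} (m : (X → ℕ) → X × X → ℕ)
    (hd : FiberSuffices G H r h d) (hadj : ∀ e ∈ es, G.Adj e.1 e.2)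
    (hcard : ∀ e ∈ es, Fintype.card Y ≤ d e.1 + 1)
    (hes : es.Pairwise fun e e' => e'.1 ≠ e.2) :
    FiberSuffices G H r h (es.foldl (fun d e => pull (m d e) e d) d) := by
  induction es generalizing d with
  | nil => exact hd
  | cons e es ih =>
    rw [List.forall_mem_cons] at hadj hcard
    rw [List.pairwise_cons] at hes
    exact ih (fiberSuffices_pull hd hadj.1 hcard.1 _) hadj.2
      (fun e' he' => (hcard.2 e' he').trans (Nat.succ_le_succ (le_pull (hes.1 e' he')))) hes.2

end FiberSuffices

section AffineForm

/-- Inner product of two vectors given as lists, the shorter one being padded by zeros. -/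
def dot : List ℕ → List ℕ → ℕ
  | a :: f, x :: n => a * x + dot f n
  | _, _ => 0

/-- Sum of two vectors given as lists, the shorter one being padded by zeros. -/
def addCoeff : List ℕ → List ℕ → List ℕ
  | [], g => g
  | f, [] => f
  | a :: f, b :: g => (a + b) :: addCoeff f g

/-- Truncated difference of two vectors given as lists, the shorter one being padded by zeros. -/
def subCoeff : List ℕ → List ℕ → List ℕ
  | [], _ => []
  | f, [] => f
  | a :: f, b :: g => (a - b) :: subCoeff f g

theorem dot_addCoeff (f g n : List ℕ) : dot (addCoeff f g) n = dot f n + dot g n := by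
  induction f, g using addCoeff.induct generalizing n with
  | case1 g => simp [addCoeff, dot]
  | case2 f hf => cases n <;> simp [addCoeff, dot]
  | case3 a f b g ih =>
    cases n with
    | nil => simp [dot]
    | cons x n => simp only [addCoeff, dot, ih]; ring

theorem dot_add_subCoeff (f g n : List ℕ) :
    dot f n + dot (subCoeff g f) n = dot g n + dot (subCoeff f g) n := by
  induction f, g using subCoeff.induct generalizing n with
  | case1 g => cases g <;> simp [subCoeff, dot]
  | case2 f hf => simp [subCoeff, dot]
  | case3 a f b g ih =>
    cases n with
    | nil => simp [dot]
    | cons x n =>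
      have hab : a * x + (b - a) * x = b * x + (a - b) * x := by
        rw [← add_mul, ← add_mul]
        congr 1
        omega
      simp only [subCoeff, dot]
      linarith [ih n]

theorem dot_map_mul (m : ℕ) (f n : List ℕ) : dot (f.map (m * ·)) n = m * dot f n := by
  induction f generalizing n with
  | nil => simp [dot]
  | cons a f ih =>
    cases n with
    | nil => simp [dot]
    | cons x n => simp only [List.map_cons, dot, ih]; ring

theorem dot_replicate (μ : ℕ) (n : List ℕ) : dot (List.replicate n.length μ) n = μ * n.sum := by
  induction n with
  | nil => simp [dot]
  | cons x n ih => simp only [List.length_cons, List.replicate_succ, dot, ih, List.sum_cons]; ring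

theorem dot_unit {n : List ℕ} {i : ℕ} (hi : i < n.length) :
    dot (List.replicate i 0 ++ [1]) n = n[i] := by
  induction n generalizing i with
  | nil => simp at hi
  | cons x n ih =>
    cases i with
    | zero => simp [dot]
    | succ i =>
      simp only [List.replicate_succ, List.cons_append, dot, List.getElem_cons_succ]
      rw [ih, zero_mul, zero_add]

theorem dot_le_dot {n n' : List ℕ} (h : List.Forall₂ (· ≤ ·) n n') (f : List ℕ) :
    dot f n ≤ dot f n' := by
  induction h generalizing f with
  | nil => exact le_rfl
  | cons hx _ ih =>
    cases f with
    | nil => simp [dot]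
    | cons a f => exact Nat.add_le_add (Nat.mul_le_mul_left a hx) (ih f)

/-- The affine form `n ↦ coeff ⬝ n - threshold`. -/
structure AffineForm where
  coeff : List ℕ
  threshold : ℕ

/-- The value of an affine form. -/
def AffineForm.eval (f : AffineForm) (n : List ℕ) : ℤ := dot f.coeff n - f.threshold

/-- The affine form `f + m • g`. -/
def AffineForm.addMul (f : AffineForm) (m : ℕ) (g : AffineForm) : AffineForm :=
  ⟨addCoeff f.coeff (g.coeff.map (m * ·)), f.threshold + m * g.threshold⟩

/-- A test for `f ≤ g` on the box `[lo, hi]`; positive and negative coefficients of `g - f` are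
evaluated at opposite corners. -/
def AffineForm.leOn (lo hi : List ℕ) (f g : AffineForm) : Bool :=
  Nat.ble (g.threshold + dot (subCoeff f.coeff g.coeff) hi)
    (f.threshold + dot (subCoeff g.coeff f.coeff) lo)

theorem AffineForm.eval_addMul (f g : AffineForm) (m : ℕ) (n : List ℕ) :
    (f.addMul m g).eval n = f.eval n + m * g.eval n := by
  simp only [eval, addMul, dot_addCoeff, dot_map_mul]
  push_cast
  ring

theorem AffineForm.eval_le_eval {f g : AffineForm} {lo hi n : List ℕ} (h : f.leOn lo hi g = true)
    (hlo : List.Forall₂ (· ≤ ·) lo n) (hhi : List.Forall₂ (· ≤ ·) n hi) :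
    f.eval n ≤ g.eval n := by
  rw [leOn, Nat.ble_eq] at h
  have h₁ := dot_le_dot hlo (subCoeff g.coeff f.coeff)
  have h₂ := dot_le_dot hhi (subCoeff f.coeff g.coeff)
  have h₃ := dot_add_subCoeff f.coeff g.coeff n
  simp only [eval]
  omega

end AffineForm

section Refutation

/-- A certificate that every point of total size `k` in a box satisfies one of finitely many
criteria, each being a list of affine forms required to be nonnegative. In `combine μ rows`, a row
`(m, j)` says: if criterion `j` fails, then its smallest form `f` on the box satisfies
`m * (f + 1) ≤ 0`; the sum of these inequalities must contradict `μ * (∑ n - k) = 0`. In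
`split i a below above` the `i`-th coordinate is `≤ a` or `> a`. -/
inductive Refutation where
  | combine (μ : ℕ) (rows : List (ℕ × ℕ))
  | split (i a : ℕ) (below above : Refutation)

/-- The forms which are not nonnegative at the lower corner. -/
def uncertain (lo : List ℕ) (fs : List AffineForm) : List AffineForm :=
  fs.filter fun f => Nat.blt (dot f.coeff lo) f.threshold

/-- Check of the rows of a linear combination; `F` accumulates the terms `m * (f + 1)` and
`total` vanishes at the points considered. -/
def checkRows (criteria : List (List AffineForm)) (lo hi : List ℕ) (total : AffineForm) :
    List (ℕ × ℕ) → AffineForm → Bool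
  | [], F => total.leOn lo hi ⟨F.coeff, F.threshold + 1⟩
  | (m, j) :: rows, F => criteria[j]?.any fun fs =>
      (uncertain lo fs).isEmpty || (uncertain lo fs).any fun f =>
        (uncertain lo fs).all (f.leOn lo hi) &&
          checkRows criteria lo hi total rows (F.addMul m ⟨f.coeff, f.threshold - 1⟩)

/-- The check that a refutation is correct on the box `[lo, hi]`. -/
def Refutation.check (criteria : List (List AffineForm)) (k : ℕ) :
    Refutation → List ℕ → List ℕ → Bool
  | combine μ rows, lo, hi =>
      checkRows criteria lo hi ⟨List.replicate lo.length μ, k * μ⟩ rows ⟨[], 0⟩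
  | split i a below above, lo, hi =>
      below.check criteria k lo (hi.set i a) && above.check criteria k (lo.set i (a + 1)) hi

variable {criteria : List (List AffineForm)} {lo hi n : List ℕ} {Q : Prop} {k : ℕ}

theorem eval_nonneg_of_notMem_uncertain {f : AffineForm} {fs : List AffineForm} (hf : f ∈ fs)
    (hlo : List.Forall₂ (· ≤ ·) lo n) (hunc : f ∉ uncertain lo fs) : 0 ≤ f.eval n := by
  have hthr : f.threshold ≤ dot f.coeff lo := by
    simpa [uncertain, hf, Nat.blt_eq] using hunc
  have := hthr.trans (dot_le_dot hlo f.coeff)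
  simp only [AffineForm.eval]
  omega

theorem of_checkRows (hcrit : ∀ fs ∈ criteria, (∀ f ∈ fs, 0 ≤ f.eval n) → Q)
    (hlo : List.Forall₂ (· ≤ ·) lo n) (hhi : List.Forall₂ (· ≤ ·) n hi) {total : AffineForm}
    (htotal : total.eval n = 0) {rows : List (ℕ × ℕ)} {F : AffineForm} (hF : F.eval n ≤ 0)
    (hcheck : checkRows criteria lo hi total rows F = true) : Q := by
  induction rows generalizing F with
  | nil =>
    have := AffineForm.eval_le_eval hcheck hlo hhi
    simp only [AffineForm.eval] at this hF htotal
    omega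
  | cons row rows ih =>
    obtain ⟨m, j⟩ := row
    by_contra hQ
    rw [checkRows, Option.any_eq_true] at hcheck
    obtain ⟨fs, hfs, hrow⟩ := hcheck
    have hfs : fs ∈ criteria := List.mem_of_getElem? hfs
    obtain ⟨g, hg, hgneg⟩ : ∃ g ∈ fs, g.eval n < 0 := by
      by_contra! hall
      exact hQ (hcrit fs hfs hall)
    have hgunc : g ∈ uncertain lo fs := by
      by_contra hunc
      exact hgneg.not_ge (eval_nonneg_of_notMem_uncertain hg hlo hunc)
    simp only [Bool.or_eq_true, List.isEmpty_iff, List.ne_nil_of_mem hgunc, false_or,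
      List.any_eq_true, Bool.and_eq_true, List.all_eq_true] at hrow
    obtain ⟨f, hfunc, hmin, hrest⟩ := hrow
    have hfg := AffineForm.eval_le_eval (hmin g hgunc) hlo hhi
    have hfthr : 0 < f.threshold := by
      have := (List.mem_filter.1 hfunc).2
      rw [Nat.blt_eq] at this
      omega
    refine hQ (ih ?_ hrest)
    have hsucc : (⟨f.coeff, f.threshold - 1⟩ : AffineForm).eval n ≤ 0 := by
      simp only [AffineForm.eval] at hfg hgneg ⊢
      omega
    rw [AffineForm.eval_addMul]
    exact add_nonpos hF (mul_nonpos_of_nonneg_of_nonpos (Int.natCast_nonneg m) hsucc)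

theorem forall₂_set {α β : Type*} {R : α → β → Prop} {l : List α} {l' : List β}
    (h : List.Forall₂ R l l') {i : ℕ} {a : α} (ha : ∀ b ∈ l'[i]?, R a b) :
    List.Forall₂ R (l.set i a) l' := by
  induction h generalizing i with
  | nil => exact .nil
  | cons hx ht ih =>
    cases i with
    | zero => exact .cons (ha _ (by simp)) ht
    | succ i => exact .cons hx (ih (by simpa using ha))

theorem Refutation.of_check (hcrit : ∀ fs ∈ criteria, (∀ f ∈ fs, 0 ≤ f.eval n) → Q)
    (hn : n.sum = k) (R : Refutation) {lo hi : List ℕ} (hlo : List.Forall₂ (· ≤ ·) lo n)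
    (hhi : List.Forall₂ (· ≤ ·) n hi) (hcheck : R.check criteria k lo hi = true) : Q := by
  induction R generalizing lo hi with
  | combine μ rows =>
    refine of_checkRows hcrit hlo hhi ?_ ?_ hcheck
    · rw [AffineForm.eval, hlo.length_eq, dot_replicate, hn, mul_comm, sub_self]
    · simp [AffineForm.eval, dot]
  | split i a below above ihb iha =>
    rw [check, Bool.and_eq_true] at hcheck
    by_cases ha : ∀ b ∈ n[i]?, b ≤ a
    · exact ihb hlo (forall₂_set hhi.flip ha).flip hcheck.1
    · push Not at ha
      obtain ⟨b, hb, hab⟩ := ha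
      refine iha (forall₂_set hlo fun b' hb' => ?_) hhi hcheck.2
      rwa [Option.mem_unique hb' hb]

end Refutation

section Plan

variable {N : ℕ}

/-- A way of reaching `(r, h)` in `G □ H`, described backwards from the root. The moves `tokens`
of `G` in the layer `G × {h}` are undone first, which gives the number of pebbles needed on each
`(x, h)`, that is `p` times as many on each fiber; `ships` are moves between fibers, undone next; a
fill `(x, z)`, undone last, is repeated until the fiber over `z` needs no more than it has. -/
structure Plan (N : ℕ) where
  tokens : List (Fin N × Fin N)
  ships : List (Fin N × Fin N)
  fills : List (Fin N × Fin N)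

/-- The number of pebbles on each vertex with which the moves `es`, the last one first, carry a
pebble to `r`. -/
def tokenDemand (r : Fin N) (es : List (Fin N × Fin N)) : Fin N → ℕ :=
  es.foldl (fun t e => pull 1 e t) (Pi.single r 1)

namespace Plan

/-- The fiber sizes demanded after all shipping, at least `p - 1` on each fiber that ships: this
forces two pebbles onto one vertex before each shipment. -/
def baseDemand (p : ℕ) (r : Fin N) (P : Plan N) : Fin N → ℕ := fun v =>
  if v ∈ (P.ships ++ P.fills).map Prod.fst then max (p - 1) (p * tokenDemand r P.tokens v)
  else p * tokenDemand r P.tokens v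

/-- The fiber sizes demanded before `ships` but after `fills`. -/
def demand (p : ℕ) (r : Fin N) (P : Plan N) : Fin N → ℕ :=
  P.ships.foldl (fun d e => pull 1 e d) (P.baseDemand p r)

/-- All moves follow edges, and no fiber ships that received earlier in the backward order. -/
def Valid (G : SimpleGraph (Fin N)) (P : Plan N) : Prop :=
  (∀ e ∈ P.tokens ++ (P.ships ++ P.fills), G.Adj e.1 e.2) ∧
    (P.ships ++ P.fills).Pairwise fun e e' => e'.1 ≠ e.2

instance (G : SimpleGraph (Fin N)) [DecidableRel G.Adj] (P : Plan N) : Decidable (P.Valid G) :=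
  inferInstanceAs (Decidable (_ ∧ _))

/-- The effect of a fill on lists of affine forms whose minimum bounds the surplus of each fiber:
with surplus `s` at the target, the source keeps `min s' (s' + 2 * s)` of its surplus `s'`. -/
def fillForms (E : Fin N → List AffineForm) (e : Fin N × Fin N) : Fin N → List AffineForm :=
  fun v =>
    if v = e.2 then [⟨[], 0⟩]
    else if v = e.1 then E v ++ (E v).flatMap fun g => (E e.2).map fun f => g.addMul 2 f
    else E v

/-- Affine forms in the fiber sizes whose nonnegativity makes the plan succeed. -/
def forms (p : ℕ) (r : Fin N) (P : Plan N) : List AffineForm :=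
  ((List.finRange N).flatMap (P.fills.foldl fillForms fun v =>
    [⟨List.replicate v 0 ++ [1], P.demand p r v⟩])).filter fun f => f.threshold ≠ 0

variable {n d : Fin N → ℕ} {E : Fin N → List AffineForm} {p : ℕ} {r : Fin N}

theorem exists_fillForms_eval_le (hE : ∀ v, ∃ f ∈ E v, f.eval (List.ofFn n) ≤ n v - d v)
    (e : Fin N × Fin N) (v : Fin N) :
    ∃ f ∈ fillForms E e v, f.eval (List.ofFn n) ≤ n v - pull (d e.2 - n e.2) e d v := by
  simp only [fillForms, pull]
  split_ifs with h₂ h₁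
  · subst h₂
    exact ⟨_, List.mem_singleton_self _, by simp only [AffineForm.eval, dot]; omega⟩
  · obtain ⟨g, hg, hgv⟩ := hE v
    obtain ⟨f, hf, hfe⟩ := hE e.2
    rcases le_total (d e.2) (n e.2) with hle | hle
    · exact ⟨g, List.mem_append_left _ hg, by omega⟩
    · refine ⟨g.addMul 2 f, List.mem_append_right _ (List.mem_flatMap.2
        ⟨g, hg, List.mem_map_of_mem hf⟩), ?_⟩
      rw [AffineForm.eval_addMul]
      omega
  · exact hE v

theorem foldl_pull_le (fills : List (Fin N × Fin N))
    (hE : ∀ v, ∃ f ∈ E v, f.eval (List.ofFn n) ≤ n v - d v)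
    (hforms : ∀ v, ∀ f ∈ fills.foldl fillForms E v, 0 ≤ f.eval (List.ofFn n)) :
    fills.foldl (fun d e => pull (d e.2 - n e.2) e d) d ≤ n := by
  induction fills generalizing d E with
  | nil =>
    intro v
    obtain ⟨f, hf, hfv⟩ := hE v
    have : (0 : ℤ) ≤ f.eval (List.ofFn n) := hforms v f hf
    simp only [List.foldl_nil]
    omega
  | cons e fills ih => exact ih (exists_fillForms_eval_le hE e) hforms

theorem eval_nonneg_of_forms {P : Plan N}
    (hn : ∀ f ∈ P.forms p r, 0 ≤ f.eval (List.ofFn n)) (v : Fin N) {f : AffineForm}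
    (hf : f ∈ P.fills.foldl fillForms
      (fun v => [⟨List.replicate v 0 ++ [1], P.demand p r v⟩]) v) :
    0 ≤ f.eval (List.ofFn n) := by
  by_cases hthr : f.threshold = 0
  · simp [AffineForm.eval, hthr]
  · exact hn f (List.mem_filter.2
      ⟨List.mem_flatMap.2 ⟨v, List.mem_finRange v, hf⟩, by simpa using hthr⟩)

theorem le_baseDemand (P : Plan N) (v : Fin N) :
    p * tokenDemand r P.tokens v ≤ P.baseDemand p r v := by
  rw [baseDemand]
  split_ifs
  · exact le_max_right _ _
  · exact le_rfl

theorem le_baseDemand_add_one {P : Plan N} {e : Fin N × Fin N} (he : e ∈ P.ships ++ P.fills) :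
    p ≤ P.baseDemand p r e.1 + 1 := by
  rw [baseDemand, if_pos (List.mem_map_of_mem he)]
  omega

theorem fiberSuffices {Y : Type*} [Fintype Y] {G : SimpleGraph (Fin N)} {H : SimpleGraph Y} {h : Y}
    (hH : PebblingBound H h p) {P : Plan N} (hP : P.Valid G)
    (hn : ∀ f ∈ P.forms p r, 0 ≤ f.eval (List.ofFn n)) : FiberSuffices G H r h n := by
  obtain ⟨hadj, hpair⟩ := hP
  simp only [List.forall_mem_append] at hadj
  have hcard {e : Fin N × Fin N} (he : e ∈ P.ships ++ P.fills) :
      Fintype.card Y ≤ P.baseDemand p r e.1 + 1 :=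
    hH.card_le.trans (le_baseDemand_add_one he)
  obtain ⟨hships, hfills, hcross⟩ := List.pairwise_append.1 hpair
  have hbase : FiberSuffices G H r h (P.baseDemand p r) :=
    (FiberSuffices.of_solvable hH (solvable_foldl_pull hadj.1 (solvable_single r))).mono
      P.le_baseDemand
  have hdemand : FiberSuffices G H r h (P.demand p r) :=
    fiberSuffices_foldl_pull (fun _ _ => 1) hbase hadj.2.1
      (fun e he => hcard (List.mem_append_left _ he)) hships
  have hdcard (e : Fin N × Fin N) (he : e ∈ P.fills) :
      Fintype.card Y ≤ P.demand p r e.1 + 1 :=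
    (hcard (List.mem_append_right _ he)).trans
      (Nat.succ_le_succ (le_foldl_pull fun e' he' => hcross e' he' e he))
  refine (fiberSuffices_foldl_pull (fun d e => d e.2 - n e.2) hdemand hadj.2.2 hdcard
    hfills).mono (foldl_pull_le P.fills (fun v => ⟨_, List.mem_singleton_self _, ?_⟩)
      fun v f hf => eval_nonneg_of_forms hn v hf)
  rw [AffineForm.eval, dot_unit (by simp), List.getElem_ofFn]

end Plan

end Plan

section Losing

/-- The tails of the vectors in `ms` whose first entry is at most `a`. -/
def tailsBelow (a : ℕ) (ms : List (List ℕ)) : List (List ℕ) :=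
  (ms.filter fun m => Nat.ble (m.headD 0) a).map List.tail

/-- The vectors of length `N` with entries at most `p` which dominate no vector in `ms`, in
lexicographic order. -/
def losing (p : ℕ) : ℕ → List (List ℕ) → List (List ℕ)
  | 0, ms => if ms.isEmpty then [[]] else []
  | N + 1, ms =>
    if ms.any (·.all (Nat.beq 0)) then []
    else (List.range (p + 1)).flatMap fun a => (losing p N (tailsBelow a ms)).map (a :: ·)

theorem forall₂_le_of_all_zero {m t : List ℕ} (hlen : m.length = t.length)
    (hm : m.all (Nat.beq 0) = true) : List.Forall₂ (· ≤ ·) m t := by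
  rw [List.forall₂_iff_zip]
  refine ⟨hlen, fun hmem => ?_⟩
  rw [List.all_eq_true] at hm
  exact (Nat.eq_of_beq_eq_true (hm _ (List.of_mem_zip hmem).1)).symm.trans_le (Nat.zero_le _)

theorem exists_le_or_mem_losing {p : ℕ} {t : List ℕ} {ms : List (List ℕ)}
    (hms : ∀ m ∈ ms, m.length = t.length) (ht : ∀ a ∈ t, a ≤ p) :
    (∃ m ∈ ms, List.Forall₂ (· ≤ ·) m t) ∨ t ∈ losing p t.length ms := by
  induction t generalizing ms with
  | nil =>
    rcases ms with _ | ⟨m, ms⟩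
    · exact .inr (List.mem_singleton_self _)
    · refine .inl ⟨m, List.mem_cons_self, ?_⟩
      rw [List.eq_nil_of_length_eq_zero (hms m List.mem_cons_self)]
      exact .nil
  | cons a t ih =>
    by_cases hzero : ms.any (·.all (Nat.beq 0)) = true
    · obtain ⟨m, hm, hm0⟩ := List.any_eq_true.1 hzero
      exact .inl ⟨m, hm, forall₂_le_of_all_zero (hms m hm) hm0⟩
    rw [List.forall_mem_cons] at ht
    have hlen : ∀ m' ∈ tailsBelow a ms, m'.length = t.length := by
      intro m' hm'
      obtain ⟨m, hm, rfl⟩ := List.mem_map.1 hm'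
      simp [hms m (List.mem_filter.1 hm).1]
    rcases ih hlen ht.2 with ⟨m', hm', hle⟩ | hmem
    · obtain ⟨m, hm, rfl⟩ := List.mem_map.1 hm'
      obtain ⟨hm, hhead⟩ := List.mem_filter.1 hm
      rcases m with _ | ⟨b, m⟩
      · simpa using hms _ hm
      · exact .inl ⟨b :: m, hm, .cons (Nat.le_of_ble_eq_true hhead) hle⟩
    · rw [List.length_cons, losing, if_neg hzero]
      exact .inr (List.mem_flatMap.2 ⟨a, List.mem_range.2 (Nat.lt_succ_of_le ht.1),
        List.mem_map_of_mem hmem⟩)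

end Losing

section Certificate

variable {N : ℕ}

/-- Certificate that the rooted pebbling number of `G □ H` at `(r, h)` is at most `k` whenever that
of `H` at `h` is at most `p`. A configuration is sorted by the number `⌊n x / p⌋` of tokens that
each of its fibers can deliver to `(x, h)`. The lists in `tokens` are the ways of winning with
tokens alone; the token vectors for which none of them suffices are refuted by the entries of
`refutations` whose positions are listed in `indices`. -/
structure Certificate (N : ℕ) where
  tokens : List (List (Fin N × Fin N))
  plans : List (Plan N)
  refutations : List Refutation
  indices : List ℕ

namespace Certificate

/-- The token vectors for which `tokens` does not suffice. -/
def losingTokens (C : Certificate N) (p : ℕ) (r : Fin N) : List (List ℕ) :=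
  losing p N (C.tokens.map fun es => List.ofFn (tokenDemand r es))

/-- The losing token vectors that are compatible with a total of `k` pebbles. -/
def boxes (C : Certificate N) (p k : ℕ) (r : Fin N) : List (List ℕ) :=
  (C.losingTokens p r).filter fun t => k ≤ p * t.sum + N * (p - 1)

/-- The test that a certificate is correct. -/
def check (C : Certificate N) (G : SimpleGraph (Fin N)) [DecidableRel G.Adj] (r : Fin N)
    (p k : ℕ) : Bool :=
  C.tokens.all (·.all fun e => G.Adj e.1 e.2) && C.plans.all (·.Valid G) &&
    (C.losingTokens p r).all (·.sum < p) && (C.boxes p k r).length ≤ C.indices.length &&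
    ((C.boxes p k r).zip C.indices).all fun (t, i) => C.refutations[i]?.any fun R =>
      R.check (C.plans.map (·.forms p r)) k (t.map (p * ·)) (t.map fun a => p * a + (p - 1))

variable {C : Certificate N} {G : SimpleGraph (Fin N)} [DecidableRel G.Adj] {r : Fin N} {p k : ℕ}
  {Y : Type*} [Fintype Y] {H : SimpleGraph Y} {h : Y}

theorem of_check (hC : C.check G r p k = true) :
    (∀ es ∈ C.tokens, ∀ e ∈ es, G.Adj e.1 e.2) ∧ (∀ P ∈ C.plans, P.Valid G) ∧
      (∀ t ∈ C.losingTokens p r, t.sum < p) ∧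
      ∀ t ∈ C.boxes p k r, ∃ R : Refutation, R.check (C.plans.map (·.forms p r)) k
        (t.map (p * ·)) (t.map fun a => p * a + (p - 1)) = true := by
  simp only [check, Bool.and_eq_true, List.all_eq_true, decide_eq_true_eq,
    Option.any_eq_true] at hC
  obtain ⟨⟨⟨⟨htokens, hplans⟩, hsum⟩, hlen⟩, hzip⟩ := hC
  refine ⟨htokens, hplans, hsum, fun t ht => ?_⟩
  rw [← List.map_fst_zip hlen] at ht
  obtain ⟨ti, hti, rfl⟩ := List.mem_map.1 ht
  obtain ⟨R, -, hR⟩ := hzip ti hti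
  exact ⟨R, hR⟩

theorem solvable_or_mem_losingTokens (hC : C.check G r p k = true) {t : Fin N → ℕ}
    (ht : ∀ x, t x ≤ p) : Solvable G t r ∨ List.ofFn t ∈ C.losingTokens p r := by
  rcases exists_le_or_mem_losing (t := List.ofFn t)
      (ms := C.tokens.map fun es => List.ofFn (tokenDemand r es)) (by simp)
      (by simpa [List.forall_mem_ofFn_iff] using ht) with ⟨m, hm, hle⟩ | hmem
  · obtain ⟨es, hes, rfl⟩ := List.mem_map.1 hm
    have hsolv : Solvable G (tokenDemand r es) r :=
      solvable_foldl_pull ((of_check hC).1 es hes) (solvable_single r)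
    refine .inl (hsolv.mono fun x => ?_)
    simpa using (List.forall₂_iff_get.1 hle).2 x (by simp) (by simp)
  · rw [List.length_ofFn] at hmem
    exact .inr hmem

theorem pebblingBound (hC : C.check G r p k = true) : PebblingBound G r p := by
  intro t ht
  have hle (x : Fin N) : t x ≤ p :=
    (Finset.single_le_sum (fun _ _ => Nat.zero_le _) (Finset.mem_univ x)).trans_eq ht
  refine (solvable_or_mem_losingTokens hC hle).resolve_right fun hmem => ?_
  have hlt := (of_check hC).2.2.1 _ hmem
  rw [List.sum_ofFn, ht] at hlt
  exact lt_irrefl p hlt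

theorem fiberSuffices (hC : C.check G r p k = true) (hH : PebblingBound H h p) {n : Fin N → ℕ}
    (hn : ∑ x, n x = k) : FiberSuffices G H r h n := by
  have hp : 0 < p := (Fintype.card_pos_iff.2 ⟨h⟩).trans_le hH.card_le
  let t (x : Fin N) := n x / p
  have hlo (x : Fin N) : p * t x ≤ n x := Nat.mul_div_le _ _
  have hhi (x : Fin N) : n x ≤ p * t x + (p - 1) := Nat.le_of_lt_succ <| by
    have := Nat.lt_mul_div_succ (n x) hp
    simp only [t]
    rw [Nat.mul_succ] at this
    omega
  by_cases hsolv : Solvable G t r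
  · exact (FiberSuffices.of_solvable hH hsolv).mono hlo
  have htp : ∑ x, t x < p := by
    by_contra! hle
    exact hsolv ((pebblingBound hC).nsolvable (by rwa [mul_one]))
  have hlosing := (solvable_or_mem_losingTokens hC fun x =>
    (Finset.single_le_sum (fun _ _ => Nat.zero_le _) (Finset.mem_univ x)).trans htp.le).resolve_left
    hsolv
  have hbox : List.ofFn t ∈ C.boxes p k r := by
    refine List.mem_filter.2 ⟨hlosing, ?_⟩
    rw [decide_eq_true_iff, List.sum_ofFn, ← hn, Finset.mul_sum]
    refine (Finset.sum_le_sum fun x _ => hhi x).trans_eq ?_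
    rw [Finset.sum_add_distrib, Finset.sum_const, Finset.card_univ, Fintype.card_fin, smul_eq_mul]
  obtain ⟨-, hplans, -, hrefuted⟩ := of_check hC
  obtain ⟨R, hR⟩ := hrefuted _ hbox
  refine R.of_check (n := List.ofFn n) (fun fs hfs hpos => ?_) (by rwa [List.sum_ofFn]) ?_ ?_ hR
  · obtain ⟨P, hP, rfl⟩ := List.mem_map.1 hfs
    exact P.fiberSuffices hH (hplans P hP) hpos
  · exact List.forall₂_iff_get.2 ⟨by simp, fun i hi _ => by simpa using hlo ⟨i, by simpa using hi⟩⟩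
  · exact List.forall₂_iff_get.2 ⟨by simp, fun i hi _ => by simpa using hhi ⟨i, by simpa using hi⟩⟩

end Certificate

end Certificate

section FiberRoot

universe u

variable {V W : Type*} [Fintype V] [Fintype W] {G : SimpleGraph V} {G' : SimpleGraph W} {r : V}
  {p k : ℕ}

/-- `π(G, r) ≤ p`, and `π(G □ H, (r, h)) ≤ k` for every rooted graph `(H, h)` with
`π(H, h) ≤ p`. -/
structure FiberRoot (G : SimpleGraph V) (r : V) (p k : ℕ) : Prop where
  bound : PebblingBound G r p
  boxProd : ∀ {Y : Type u} [Fintype Y] {H : SimpleGraph Y} {h : Y},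
    PebblingBound H h p → PebblingBound (G □ H) (r, h) k

theorem FiberRoot.copy (hG : FiberRoot.{u} G r p k) (φ : Copy G G')
    (hcard : Fintype.card V = Fintype.card W) : FiberRoot.{u} G' (φ r) p k where
  bound := hG.bound.copy φ hcard
  boxProd {Y _ H h} hH := by
    let ψ : Copy (G □ H) (G' □ H) :=
      ⟨⟨Prod.map φ id, fun {a b} hab => by
        simp only [boxProd_adj, Prod.map_fst, Prod.map_snd, id] at hab ⊢
        exact hab.imp (And.imp_left φ.toHom.map_adj) (And.imp_right (congrArg φ))⟩,
        φ.injective.prodMap Function.injective_id⟩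
    exact (hG.boxProd hH).copy ψ (by simp [hcard])

theorem FiberRoot.of_le {G G' : SimpleGraph V} (hG : FiberRoot.{u} G r p k) (hle : G ≤ G') :
    FiberRoot.{u} G' r p k :=
  hG.copy (Copy.ofLE G G' hle) rfl

theorem FiberRoot.of_equiv (hG : FiberRoot.{u} G r p k) (σ : V ≃ W)
    (hσ : ∀ a b, G.Adj a b → G'.Adj (σ a) (σ b)) : FiberRoot.{u} G' (σ r) p k :=
  hG.copy ⟨⟨σ, hσ _ _⟩, σ.injective⟩ (Fintype.card_congr σ)

theorem Certificate.fiberRoot {N : ℕ} {G : SimpleGraph (Fin N)} [DecidableRel G.Adj] {r : Fin N}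
    {C : Certificate N} (hC : C.check G r p k = true) : FiberRoot.{u} G r p k where
  bound := C.pebblingBound hC
  boxProd {Y _ H h} hH c hc :=
    C.fiberSuffices hC hH (n := fun x => ∑ y, c (x, y)) (by rw [← hc, Fintype.sum_prod_type])
      c fun _ => le_rfl

end FiberRoot

section Certificates

/-- A spanning subgraph common to the three Lemke graphs. -/
def lemkeCore : SimpleGraph (Fin 8) :=
  SimpleGraph.fromRel fun a b =>
    (a, b) ∈ ([(0, 1), (0, 2), (1, 3), (2, 4), (2, 5), (2, 6), (3, 4), (3, 7), (4, 7),
      (5, 7), (6, 7)] : List (Fin 8 × Fin 8))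

instance : DecidableRel lemkeCore.Adj := inferInstanceAs (DecidableRel (fromRel _).Adj)

instance : DecidableRel lemkeL.Adj := inferInstanceAs (DecidableRel (fromRel _).Adj)

instance : DecidableRel lemkeL1.Adj := inferInstanceAs (DecidableRel (fromRel _).Adj)

instance : DecidableRel lemkeL2.Adj := inferInstanceAs (DecidableRel (fromRel _).Adj)

def coreCertificate0 : Certificate 8 where
  tokens :=
    [[], [(2, 0)], [(1, 0)], [(2, 0), (6, 2)], [(2, 0), (5, 2)], [(2, 0), (4, 2)],
     [(1, 0), (3, 1)], [(2, 0), (6, 2), (6, 2)], [(2, 0), (6, 2), (5, 2)], [(2, 0), (5, 2), (5, 2)],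
     [(2, 0), (6, 2), (4, 2)], [(2, 0), (5, 2), (4, 2)], [(2, 0), (4, 2), (4, 2)],
     [(1, 0), (3, 1), (3, 1)], [(2, 0), (6, 2), (7, 6)], [(2, 0), (5, 2), (7, 5)],
     [(2, 0), (4, 2), (7, 4)], [(2, 0), (4, 2), (3, 4)], [(1, 0), (3, 1), (7, 3)],
     [(1, 0), (3, 1), (4, 3)], [(2, 0), (6, 2), (7, 6), (6, 2)], [(2, 0), (5, 2), (7, 5), (6, 2)],
     [(2, 0), (6, 2), (7, 6), (5, 2)], [(2, 0), (5, 2), (7, 5), (5, 2)],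
     [(2, 0), (4, 2), (7, 4), (6, 2)], [(2, 0), (4, 2), (7, 4), (5, 2)],
     [(2, 0), (6, 2), (7, 6), (4, 2)], [(2, 0), (5, 2), (7, 5), (4, 2)],
     [(2, 0), (4, 2), (7, 4), (4, 2)], [(2, 0), (6, 2), (4, 2), (3, 4)],
     [(2, 0), (5, 2), (4, 2), (3, 4)], [(2, 0), (4, 2), (4, 2), (3, 4)],
     [(1, 0), (3, 1), (7, 3), (3, 1)], [(1, 0), (3, 1), (4, 3), (3, 1)],
     [(2, 0), (4, 2), (7, 4), (7, 4)], [(2, 0), (4, 2), (7, 4), (3, 4)],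
     [(2, 0), (6, 2), (7, 6), (3, 7)], [(2, 0), (5, 2), (7, 5), (3, 7)],
     [(1, 0), (3, 1), (7, 3), (7, 3)], [(1, 0), (3, 1), (7, 3), (4, 3)],
     [(1, 0), (3, 1), (7, 3), (6, 7)], [(1, 0), (3, 1), (7, 3), (5, 7)],
     [(2, 0), (4, 2), (7, 4), (7, 4), (6, 2)], [(2, 0), (6, 2), (7, 6), (5, 2), (7, 5)],
     [(2, 0), (4, 2), (7, 4), (7, 4), (5, 2)], [(2, 0), (6, 2), (7, 6), (4, 2), (7, 4)],
     [(2, 0), (5, 2), (7, 5), (4, 2), (7, 4)], [(2, 0), (4, 2), (7, 4), (7, 4), (4, 2)],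
     [(1, 0), (3, 1), (7, 3), (7, 3), (3, 1)], [(2, 0), (4, 2), (7, 4), (6, 2), (3, 4)],
     [(2, 0), (6, 2), (7, 6), (6, 2), (3, 7)], [(2, 0), (5, 2), (7, 5), (6, 2), (3, 7)],
     [(2, 0), (4, 2), (7, 4), (5, 2), (3, 4)], [(2, 0), (6, 2), (7, 6), (5, 2), (3, 7)],
     [(2, 0), (5, 2), (7, 5), (5, 2), (3, 7)], [(2, 0), (6, 2), (7, 6), (4, 2), (3, 4)],
     [(2, 0), (5, 2), (7, 5), (4, 2), (3, 4)], [(1, 0), (3, 1), (7, 3), (4, 3), (3, 1)],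
     [(2, 0), (6, 2), (7, 6), (4, 2), (3, 7)], [(2, 0), (5, 2), (7, 5), (4, 2), (3, 7)],
     [(1, 0), (3, 1), (7, 3), (6, 7), (3, 1)], [(1, 0), (3, 1), (7, 3), (5, 7), (3, 1)],
     [(1, 0), (3, 1), (7, 3), (7, 3), (6, 7)], [(1, 0), (3, 1), (7, 3), (7, 3), (5, 7)],
     [(2, 0), (6, 2), (7, 6), (4, 2), (7, 4), (7, 4)],
     [(2, 0), (5, 2), (7, 5), (4, 2), (7, 4), (7, 4)],
     [(2, 0), (4, 2), (7, 4), (7, 4), (4, 2), (7, 4)],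
     [(1, 0), (3, 1), (7, 3), (7, 3), (3, 1), (7, 3)],
     [(2, 0), (6, 2), (7, 6), (5, 2), (7, 5), (3, 7)],
     [(1, 0), (3, 1), (7, 3), (7, 3), (3, 1), (7, 3), (7, 3)]]
  plans :=
    [⟨[], [], [(1, 0)]⟩, ⟨[(2, 0), (6, 2), (7, 6)], [], [(6, 2), (7, 6)]⟩,
     ⟨[(1, 0), (3, 1), (7, 3)], [], [(3, 1), (7, 3)]⟩, ⟨[(2, 0), (5, 2)], [], [(5, 2)]⟩,
     ⟨[(1, 0), (3, 1), (7, 3), (5, 7)], [], [(3, 1), (7, 3), (5, 7)]⟩,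
     ⟨[(2, 0), (6, 2), (5, 2)], [], [(7, 6), (5, 7)]⟩,
     ⟨[(2, 0), (5, 2), (4, 2)], [], [(3, 4), (7, 3), (5, 7)]⟩, ⟨[(2, 0), (4, 2)], [], [(4, 2)]⟩,
     ⟨[], [], [(1, 0), (3, 1), (4, 3)]⟩, ⟨[], [], [(2, 0), (6, 2)]⟩,
     ⟨[(2, 0), (4, 2), (7, 4)], [], [(4, 2), (7, 4)]⟩,
     ⟨[(2, 0), (5, 2), (7, 5)], [], [(5, 2), (7, 5)]⟩,
     ⟨[(2, 0), (6, 2), (5, 2)], [], [(7, 5), (7, 6), (4, 7)]⟩, ⟨[], [], [(2, 0), (4, 2)]⟩,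
     ⟨[(1, 0), (3, 1), (4, 3)], [], [(3, 1), (4, 3)]⟩, ⟨[], [], [(1, 0), (3, 1)]⟩,
     ⟨[], [], [(2, 0), (5, 2)]⟩, ⟨[(1, 0), (3, 1), (7, 3), (5, 7)], [], [(3, 1), (3, 7)]⟩,
     ⟨[(2, 0), (5, 2), (4, 2), (3, 4)], [], [(3, 4)]⟩,
     ⟨[(2, 0), (6, 2)], [], [(2, 6), (5, 2), (7, 5)]⟩, ⟨[], [], [(2, 0), (5, 2), (7, 5)]⟩,
     ⟨[(1, 0), (3, 1), (7, 3), (6, 7)], [], [(3, 1), (3, 7)]⟩,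
     ⟨[(2, 0), (6, 2), (4, 2), (3, 4)], [], [(3, 4)]⟩, ⟨[], [], [(2, 0), (6, 2), (7, 6)]⟩,
     ⟨[(2, 0), (6, 2)], [], [(6, 2), (7, 6), (4, 7)]⟩,
     ⟨[(1, 0), (3, 1), (7, 3), (6, 7)], [], [(3, 1), (4, 3), (7, 4), (6, 7)]⟩,
     ⟨[(2, 0), (6, 2), (4, 2)], [], [(3, 4), (7, 3), (6, 7)]⟩,
     ⟨[(2, 0), (6, 2), (5, 2)], [], [(7, 5), (3, 7), (4, 3)]⟩,
     ⟨[(1, 0)], [], [(3, 1), (7, 3), (5, 7)]⟩,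
     ⟨[(1, 0), (3, 1), (4, 3)], [], [(7, 3), (7, 4), (5, 7)]⟩,
     ⟨[(2, 0), (5, 2), (4, 2)], [], [(7, 4), (7, 5), (6, 7)]⟩,
     ⟨[(2, 0), (6, 2), (4, 2)], [], [(7, 4), (7, 6), (5, 7)]⟩,
     ⟨[(2, 0), (6, 2), (7, 6), (3, 7)], [], [(4, 2), (4, 3), (7, 4), (5, 7)]⟩,
     ⟨[], [], [(2, 0), (4, 2), (3, 4)]⟩, ⟨[(2, 0), (5, 2)], [], [(2, 5), (4, 2), (3, 4)]⟩,
     ⟨[(2, 0), (6, 2)], [], [(2, 6), (4, 2), (3, 4)]⟩,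
     ⟨[(2, 0), (6, 2), (5, 2)], [], [(7, 5), (7, 6), (3, 7)]⟩,
     ⟨[(1, 0), (3, 1)], [], [(3, 1), (4, 3)]⟩, ⟨[(2, 0), (6, 2)], [], [(6, 2)]⟩,
     ⟨[(1, 0)], [], [(3, 1), (7, 3), (6, 7)]⟩, ⟨[(2, 0), (6, 2), (5, 2)], [], [(7, 5), (6, 7)]⟩,
     ⟨[(1, 0), (3, 1), (7, 3), (6, 7)], [], [(4, 3), (7, 4), (6, 7)]⟩,
     ⟨[(2, 0), (5, 2)], [], [(5, 2), (7, 5), (6, 7)]⟩,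
     ⟨[(1, 0), (3, 1), (7, 3), (5, 7)], [], [(4, 3), (7, 4), (5, 7)]⟩,
     ⟨[(2, 0), (6, 2), (7, 6), (5, 2), (3, 7)], [], [(7, 3), (7, 5), (6, 7)]⟩,
     ⟨[(1, 0), (3, 1), (7, 3), (6, 7)], [], [(3, 1), (7, 3), (6, 7)]⟩,
     ⟨[(2, 0), (5, 2), (7, 5)], [], [(4, 2), (7, 4), (5, 7)]⟩,
     ⟨[(1, 0), (3, 1), (7, 3)], [], [(3, 1), (7, 3), (5, 7)]⟩,
     ⟨[(2, 0), (6, 2), (7, 6), (3, 7)], [], [(4, 2), (3, 4), (7, 3), (6, 7)]⟩,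
     ⟨[(1, 0), (3, 1)], [], [(3, 1), (7, 3), (6, 7)]⟩,
     ⟨[(2, 0), (5, 2), (7, 5), (3, 7)], [], [(4, 2), (3, 4), (7, 3), (5, 7)]⟩,
     ⟨[(1, 0), (3, 1)], [], [(3, 1), (7, 3), (5, 7)]⟩,
     ⟨[(1, 0), (3, 1), (7, 3), (5, 7)], [], [(7, 5), (3, 7), (1, 3)]⟩,
     ⟨[], [], [(1, 0), (3, 1), (7, 3), (5, 7)]⟩,
     ⟨[(2, 0), (6, 2), (7, 6)], [], [(4, 2), (7, 4), (6, 7)]⟩,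
     ⟨[], [], [(1, 0), (3, 1), (7, 3), (6, 7)]⟩,
     ⟨[(2, 0), (6, 2), (7, 6)], [], [(5, 2), (7, 5), (6, 7)]⟩,
     ⟨[(2, 0), (4, 2)], [], [(4, 2), (7, 4), (5, 7)]⟩,
     ⟨[(1, 0), (3, 1), (4, 3)], [], [(3, 1), (4, 3), (7, 4), (5, 7)]⟩,
     ⟨[(2, 0), (6, 2), (7, 6), (3, 7)], [], [(5, 7), (2, 5), (6, 2)]⟩,
     ⟨[(2, 0), (5, 2), (7, 5), (3, 7)], [], [(6, 7), (2, 6), (5, 2)]⟩,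
     ⟨[(2, 0), (6, 2), (7, 6), (3, 7)], [], [(5, 2), (7, 5), (3, 7)]⟩,
     ⟨[(1, 0), (3, 1), (7, 3)], [], [(3, 1), (3, 7), (4, 3)]⟩,
     ⟨[(2, 0), (4, 2), (3, 4)], [], [(5, 2), (7, 5), (6, 7)]⟩,
     ⟨[(2, 0), (6, 2), (7, 6), (4, 2), (3, 7)], [], [(3, 4), (7, 3), (5, 7)]⟩,
     ⟨[(2, 0), (6, 2)], [], [(2, 6), (5, 2)]⟩, ⟨[(2, 0), (5, 2)], [], [(2, 5), (6, 2)]⟩,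
     ⟨[(1, 0), (3, 1), (7, 3), (5, 7)], [], [(7, 3), (7, 5), (6, 7)]⟩,
     ⟨[(2, 0), (4, 2), (7, 4)], [], [(6, 2), (7, 6), (4, 7)]⟩,
     ⟨[(1, 0), (3, 1), (4, 3)], [], [(7, 3), (7, 4), (6, 7)]⟩,
     ⟨[(1, 0), (3, 1), (4, 3)], [], [(4, 3), (7, 4), (6, 7)]⟩,
     ⟨[(2, 0), (4, 2)], [], [(4, 2), (7, 4), (6, 7)]⟩,
     ⟨[(1, 0), (3, 1), (4, 3)], [], [(4, 3), (7, 4), (5, 7)]⟩,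
     ⟨[(1, 0)], [], [(3, 1), (4, 3), (7, 4), (5, 7)]⟩,
     ⟨[(1, 0), (3, 1), (7, 3), (6, 7)], [], [(3, 7), (1, 3)]⟩,
     ⟨[(1, 0), (3, 1), (7, 3), (5, 7)], [], [(3, 7), (1, 3)]⟩,
     ⟨[(1, 0), (3, 1), (4, 3)], [], [(7, 4), (3, 7), (1, 3)]⟩, ⟨[(1, 0)], [], [(3, 1), (4, 3)]⟩,
     ⟨[(2, 0), (6, 2)], [], [(4, 2), (3, 4)]⟩,
     ⟨[(1, 0), (3, 1), (7, 3), (6, 7)], [], [(4, 7), (3, 4), (1, 3)]⟩,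
     ⟨[(1, 0)], [], [(3, 1), (4, 3), (7, 4), (6, 7)]⟩,
     ⟨[(1, 0), (3, 1)], [], [(4, 3), (7, 4), (6, 7)]⟩,
     ⟨[(1, 0), (3, 1), (4, 3)], [], [(3, 4), (7, 3), (6, 7)]⟩,
     ⟨[(1, 0), (3, 1), (7, 3), (5, 7)], [], [(7, 5), (6, 7)]⟩,
     ⟨[(2, 0), (5, 2)], [], [(4, 2), (3, 4)]⟩,
     ⟨[(1, 0), (3, 1), (7, 3), (5, 7)], [], [(4, 7), (3, 4), (1, 3)]⟩,
     ⟨[(1, 0), (3, 1)], [], [(4, 3), (7, 4), (5, 7)]⟩,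
     ⟨[(1, 0), (3, 1), (4, 3)], [], [(3, 4), (7, 3), (5, 7)]⟩,
     ⟨[(1, 0), (3, 1), (7, 3), (6, 7)], [], [(7, 6), (5, 7)]⟩,
     ⟨[], [], [(2, 0), (6, 2), (7, 6), (3, 7)]⟩, ⟨[(2, 0)], [], [(4, 2), (7, 4), (3, 7), (1, 3)]⟩,
     ⟨[(2, 0), (5, 2)], [], [(7, 5), (3, 7), (1, 3)]⟩,
     ⟨[(1, 0), (3, 1), (4, 3)], [], [(3, 1), (3, 4), (7, 3), (6, 7)]⟩,
     ⟨[(2, 0), (4, 2), (3, 4)], [], [(4, 3), (2, 4), (6, 2)]⟩,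
     ⟨[(2, 0), (6, 2)], [], [(6, 2), (7, 6), (5, 7)]⟩,
     ⟨[(1, 0), (3, 1), (7, 3), (6, 7)], [], [(3, 1), (7, 3), (7, 6)]⟩,
     ⟨[(1, 0), (3, 1), (7, 3)], [], [(3, 1), (4, 3), (7, 4)]⟩,
     ⟨[(2, 0), (4, 2), (7, 4)], [], [(6, 2), (7, 6), (3, 7), (4, 3)]⟩,
     ⟨[(1, 0), (3, 1), (4, 3)], [], [(3, 1), (7, 3), (7, 4), (6, 7)]⟩,
     ⟨[(2, 0), (4, 2), (7, 4)], [], [(5, 2), (7, 5), (3, 7), (4, 3)]⟩,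
     ⟨[(1, 0), (3, 1), (4, 3)], [], [(3, 1), (7, 3), (7, 4), (5, 7)]⟩,
     ⟨[(1, 0), (3, 1), (7, 3), (6, 7)], [], [(3, 1), (3, 7), (4, 3)]⟩,
     ⟨[(2, 0), (6, 2), (5, 2)], [], [(7, 6), (3, 7), (4, 3)]⟩,
     ⟨[(1, 0), (3, 1), (7, 3), (5, 7)], [], [(3, 1), (3, 7), (4, 3)]⟩,
     ⟨[(1, 0), (3, 1), (4, 3)], [], [(3, 1), (4, 3), (7, 4), (6, 7)]⟩,
     ⟨[(1, 0), (3, 1), (7, 3)], [], [(3, 1), (4, 3), (4, 7)]⟩,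
     ⟨[(1, 0), (3, 1), (7, 3)], [], [(3, 1), (7, 3), (6, 7)]⟩, ⟨[(1, 0), (3, 1)], [], [(3, 1)]⟩,
     ⟨[(2, 0), (6, 2), (7, 6), (3, 7)], [], [(4, 3), (2, 4), (5, 2), (7, 5)]⟩,
     ⟨[(2, 0), (6, 2), (7, 6)], [], [(5, 7), (2, 5), (4, 2), (3, 4)]⟩,
     ⟨[(2, 0), (4, 2), (7, 4)], [], [(5, 2), (7, 5), (4, 7)]⟩,
     ⟨[(1, 0), (3, 1), (4, 3)], [], [(1, 3)]⟩, ⟨[(1, 0)], [], [(3, 1)]⟩,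
     ⟨[(1, 0), (3, 1), (7, 3), (6, 7)], [], [(2, 6), (4, 2), (3, 4), (1, 3)]⟩,
     ⟨[], [], [(2, 0), (6, 2), (7, 6), (4, 7)]⟩, ⟨[(2, 0), (4, 2)], [], [(2, 4), (6, 2)]⟩,
     ⟨[], [], [(2, 0), (5, 2), (7, 5), (4, 7)]⟩, ⟨[(2, 0), (4, 2)], [], [(2, 4), (5, 2)]⟩,
     ⟨[(2, 0), (4, 2)], [], [(7, 4), (5, 7), (2, 5), (6, 2)]⟩,
     ⟨[], [], [(2, 0), (5, 2), (7, 5), (3, 7)]⟩, ⟨[], [], [(2, 0), (4, 2), (3, 4), (1, 3)]⟩,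
     ⟨[(1, 0)], [], [(3, 1), (4, 3), (2, 4), (5, 2)]⟩,
     ⟨[(2, 0), (5, 2)], [], [(7, 5), (4, 7), (3, 4), (1, 3)]⟩,
     ⟨[(2, 0), (6, 2)], [], [(7, 6), (4, 7), (3, 4), (1, 3)]⟩,
     ⟨[(1, 0), (3, 1), (7, 3), (6, 7)], [], [(4, 3), (4, 7)]⟩,
     ⟨[(1, 0), (3, 1), (7, 3), (5, 7)], [], [(4, 3), (4, 7)]⟩,
     ⟨[(1, 0), (3, 1), (4, 3)], [], [(3, 1), (3, 4), (7, 3), (5, 7)]⟩,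
     ⟨[(2, 0), (4, 2), (3, 4)], [], [(4, 3), (2, 4), (5, 2)]⟩,
     ⟨[], [(1, 0), (1, 0), (1, 0)], [(2, 0), (6, 2)]⟩,
     ⟨[], [(1, 0), (1, 0), (1, 0)], [(2, 0), (5, 2)]⟩]
  refutations :=
    [.combine 2 [(1, 0)],
     .combine 2 [(1, 1), (1, 2)],
     .combine 8 [(4, 3), (1, 4), (2, 5), (1, 6)],
     .combine 8 [(4, 7), (1, 8)],
     .combine 4 [(1, 9)],
     .combine 2 [(1, 10), (1, 2)],
     .combine 2 [(1, 11), (1, 2)],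
     .combine 4 [(1, 12), (1, 13), (1, 7), (1, 14)],
     .combine 4 [(1, 15)],
     .combine 4 [(1, 16), (2, 17), (2, 18)],
     .combine 8 [(1, 19), (1, 20)],
     .combine 4 [(1, 9), (2, 21), (2, 22)],
     .combine 32 [(4, 23), (5, 24), (2, 25), (2, 26), (4, 27)],
     .combine 16 [(8, 0), (8, 3), (1, 28), (4, 29)],
     .combine 48 [(12, 2), (6, 23), (5, 12), (5, 30), (2, 31), (3, 32)],
     .combine 16 [(2, 33), (1, 34), (1, 35), (2, 36), (5, 37)],
     .combine 12 [(6, 0), (6, 38), (1, 39), (3, 40)],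
     .combine 32 [(16, 0), (5, 24), (8, 40), (4, 41)],
     .combine 24 [(12, 0), (3, 31), (2, 5), (4, 42), (3, 43)],
     .combine 8 [(1, 23), (2, 38), (2, 44), (1, 45)],
     .combine 8 [(1, 46), (1, 47)],
     .combine 4 [(2, 14), (1, 33)],
     .combine 16 [(1, 48), (3, 49)],
     .combine 16 [(1, 50), (3, 51)],
     .combine 15 [(2, 52), (1, 53)],
     .combine 16 [(4, 54), (1, 55)],
     .combine 8 [(1, 23), (2, 30), (1, 24)],
     .combine 8 [(1, 47), (1, 56)],
     .combine 48 [(11, 12), (6, 33), (1, 57), (2, 32), (3, 58)],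
     .combine 8 [(2, 9), (1, 38), (1, 49), (4, 22), (1, 59)],
     .combine 8 [(2, 16), (1, 3), (1, 51), (4, 18), (1, 60)],
     .combine 14 [(1, 53), (2, 51), (2, 61)],
     .combine 96 [(6, 53), (3, 51), (8, 62), (12, 63), (11, 64)],
     .combine 24 [(3, 16), (5, 65), (4, 66), (3, 15)],
     .combine 8 [(4, 0), (2, 67), (1, 56)],
     .combine 8 [(1, 68), (2, 69)],
     .combine 360 [(152, 0), (72, 12), (8, 30), (7, 20), (64, 69), (26, 28)],
     .combine 8 [(1, 70), (1, 71)],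
     .combine 8 [(1, 72), (1, 57)],
     .combine 32 [(16, 0), (7, 12), (4, 71), (1, 73), (3, 72)],
     .combine 16 [(4, 38), (4, 66), (1, 55), (1, 39), (3, 74)],
     .combine 16 [(4, 3), (4, 65), (1, 53), (1, 28), (3, 75)],
     .combine 37 [(4, 76), (5, 8)],
     .combine 8 [(1, 8), (1, 34), (1, 35), (1, 77)],
     .combine 32 [(4, 8), (8, 66), (3, 77), (4, 78), (4, 79)],
     .combine 528 [(264, 38), (33, 55), (16, 80), (6, 79), (6, 81), (52, 82), (132, 83)],
     .combine 32 [(4, 8), (8, 65), (3, 77), (4, 84), (4, 85)],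
     .combine 528 [(264, 3), (33, 53), (16, 73), (6, 85), (6, 86), (52, 87), (132, 88)],
     .combine 64 [(7, 39), (4, 89), (2, 90), (8, 91)],
     .split 7 3
       (.split 5 13
          (.combine 12 [(3, 9), (2, 38), (1, 92), (1, 93)])
          (.combine 12 [(3, 9), (7, 66), (1, 92), (1, 93)]))
       (.combine 8 [(2, 9), (2, 66), (1, 45), (1, 26)]),
     .combine 3 [(1, 94)],
     .combine 8 [(1, 23), (2, 95), (2, 44)],
     .combine 8 [(1, 96), (1, 54)],
     .combine 10 [(1, 97), (2, 98)],
     .combine 10 [(1, 99), (2, 100)],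
     .combine 32 [(7, 12), (2, 53), (2, 92), (2, 32)],
     .combine 8 [(1, 8), (2, 78), (1, 27), (1, 101)],
     .combine 8 [(1, 8), (2, 84), (1, 102), (1, 103)],
     .combine 14 [(1, 104), (2, 71)],
     .combine 14 [(1, 58), (2, 57)],
     .combine 6 [(2, 105), (1, 71)],
     .combine 6 [(2, 105), (1, 57)],
     .combine 16 [(3, 106), (4, 61)],
     .combine 8 [(1, 8), (1, 34), (2, 14), (1, 35)],
     .combine 4 [(1, 36), (2, 107)],
     .combine 4 [(1, 62)],
     .combine 352 [(84, 65), (44, 33), (16, 66), (18, 108), (21, 109)],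
     .combine 4 [(2, 107), (1, 33)],
     .combine 24 [(6, 65), (3, 33), (2, 34), (12, 107)],
     .combine 8 [(1, 110), (2, 29)],
     .combine 30 [(6, 12), (2, 53), (1, 30), (5, 69), (1, 28)],
     .combine 4 [(2, 0), (1, 12), (2, 7), (2, 111)],
     .combine 8 [(1, 8), (2, 12), (4, 7), (1, 77)],
     .combine 4 [(1, 38), (1, 66), (1, 15), (1, 112)],
     .combine 4 [(1, 3), (1, 65), (1, 15), (1, 112)],
     .combine 63 [(4, 53), (2, 28), (6, 76), (4, 113), (7, 52)],
     .combine 64 [(4, 114), (15, 115)],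
     .combine 64 [(4, 116), (15, 117)],
     .combine 10 [(5, 0), (2, 65), (2, 66)],
     .combine 127 [(16, 23), (15, 66), (16, 28), (9, 19), (8, 118)],
     .combine 110 [(14, 33), (13, 39), (6, 113), (4, 81)],
     .combine 15 [(2, 8), (1, 28), (1, 90), (2, 91)],
     .combine 3232 [(136, 119), (61, 90), (37, 113), (95, 81), (66, 120), (172, 121), (157, 122),
       (159, 123)],
     .split 0 3
       (.combine 8 [(1, 38), (2, 66), (1, 69), (1, 39), (1, 115)])
       (.combine 8 [(8, 0), (1, 38), (2, 66), (1, 115), (4, 124)]),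
     .split 0 3
       (.combine 8 [(1, 3), (2, 65), (1, 28), (1, 29), (1, 117)])
       (.combine 8 [(8, 0), (1, 3), (2, 65), (1, 117), (4, 125)]),
     .split 7 3
       (.split 6 13
          (.combine 12 [(3, 16), (2, 3), (1, 126), (1, 127)])
          (.combine 12 [(3, 16), (7, 65), (1, 126), (1, 127)]))
       (.combine 8 [(2, 16), (2, 65), (1, 4), (1, 6)]),
     .split 1 12
       (.combine 4 [(2, 0), (2, 38), (1, 69), (1, 40)])
       (.combine 8 [(2, 38), (1, 69), (1, 30), (1, 39), (1, 40), (2, 128)]),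
     .split 1 12
       (.combine 4 [(2, 0), (2, 3), (1, 29), (1, 5)])
       (.combine 8 [(2, 3), (1, 29), (1, 28), (1, 31), (1, 5), (2, 129)])]
  indices :=
    [1, 1, 1, 1, 1, 1, 1, 4, 1, 4, 6, 6, 6, 10, 27, 4, 4, 50, 6, 6, 10, 10, 78, 10, 5, 5, 5, 25,
     25, 4, 4, 76, 20, 20, 10, 14, 14, 4, 26, 49, 26, 77, 78, 2, 2, 77, 2, 2, 3, 5, 3, 3, 3, 7, 65,
     3, 58, 3, 59, 7, 7, 1, 1, 1, 1, 1, 1, 1, 4, 1, 1, 4, 19, 6, 6, 6, 6, 10, 27, 51, 4, 19, 49, 19,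
     9, 6, 6, 9, 2, 9, 2, 85, 2, 65, 5, 5, 5, 65, 52, 53, 4, 12, 49, 12, 65, 20, 54, 43, 55, 14, 14,
     56, 12, 49, 12, 9, 2, 57, 2, 85, 2, 85, 2, 65, 5, 5, 3, 58, 3, 59, 7, 28, 3, 3, 3, 60, 3, 61,
     7, 28, 8, 1, 8, 1, 1, 4, 11, 11, 8, 6, 6, 8, 31, 62, 11, 29, 8, 9, 9, 9, 30, 8, 5, 5, 8, 22, 8,
     23, 15, 32, 8, 21, 21, 21, 63, 8, 8, 22, 11, 11, 8, 23, 64, 31, 11, 29, 9, 9, 9, 30, 8, 65, 15,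
     22, 15, 23, 15, 32, 1, 4, 4, 10, 4, 10, 1, 1, 4, 10, 4, 10, 65, 4, 76, 67, 77, 43, 66, 8, 4, 8,
     33, 8, 67, 67, 67, 68, 0, 0, 1, 0, 1, 0, 16, 0, 6, 0, 34, 34, 0, 16, 16, 16, 0, 6, 0, 18, 0,
     13, 87, 18, 0, 5, 0, 35, 35, 0, 17, 86, 17, 0, 69, 69, 0, 36, 36, 70, 83, 17, 86, 17, 0, 13,
     84, 18, 13, 13, 87, 18, 0, 0, 37, 0, 38, 71, 39, 0, 3, 3, 37, 3, 38, 72, 39, 0, 0, 40, 0, 0,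
     24, 73, 40, 0, 74, 41, 41, 0, 0, 42, 44, 45, 0, 24, 43, 75, 44, 45, 46, 46, 47, 47, 0, 1, 0, 0,
     0, 10, 0, 0, 76, 0, 77, 78, 79, 0, 0, 48, 0, 24, 78, 48, 0, 42, 43, 80, 43, 81, 43, 82]

theorem fiberRoot_lemkeCore_0 : FiberRoot lemkeCore 0 8 85 :=
  Certificate.fiberRoot (C := coreCertificate0) (by decide +kernel)

def coreCertificate2 : Certificate 8 where
  tokens :=
    [[], [(6, 2)], [(5, 2)], [(4, 2)], [(0, 2)], [(6, 2), (7, 6)], [(5, 2), (7, 5)],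
     [(4, 2), (7, 4)], [(4, 2), (3, 4)], [(0, 2), (1, 0)], [(4, 2), (7, 4), (7, 4)],
     [(4, 2), (7, 4), (3, 4)], [(6, 2), (7, 6), (3, 7)], [(5, 2), (7, 5), (3, 7)],
     [(4, 2), (3, 4), (3, 4)], [(4, 2), (3, 4), (1, 3)], [(0, 2), (1, 0), (1, 0)],
     [(0, 2), (1, 0), (3, 1)], [(4, 2), (7, 4), (3, 4), (1, 3)], [(6, 2), (7, 6), (3, 7), (1, 3)],
     [(5, 2), (7, 5), (3, 7), (1, 3)], [(4, 2), (3, 4), (3, 4), (1, 3)],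
     [(0, 2), (1, 0), (3, 1), (1, 0)], [(0, 2), (1, 0), (3, 1), (7, 3)]]
  plans :=
    [⟨[], [], [(4, 2), (3, 4)]⟩, ⟨[(4, 2), (3, 4)], [], [(3, 4)]⟩,
     ⟨[(0, 2)], [], [(1, 0), (3, 1)]⟩, ⟨[(5, 2)], [], [(7, 5), (3, 7)]⟩,
     ⟨[(6, 2)], [], [(7, 6), (3, 7), (1, 3)]⟩, ⟨[(4, 2)], [], [(3, 4), (1, 3)]⟩,
     ⟨[(5, 2)], [], [(7, 5), (3, 7), (1, 3)]⟩, ⟨[], [], [(5, 2)]⟩, ⟨[], [], [(0, 2), (1, 0)]⟩,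
     ⟨[(0, 2)], [], [(1, 0)]⟩, ⟨[(0, 2), (1, 0)], [], [(1, 0)]⟩,
     ⟨[(4, 2), (3, 4), (1, 3)], [], [(1, 3)]⟩, ⟨[], [], [(4, 2), (7, 4)]⟩,
     ⟨[(0, 2)], [], [(1, 0), (3, 1), (4, 3)]⟩, ⟨[(5, 2)], [], [(7, 5), (3, 7), (4, 3)]⟩,
     ⟨[(6, 2)], [], [(7, 6), (3, 7), (4, 3)]⟩, ⟨[(0, 2), (1, 0)], [], [(0, 1)]⟩,
     ⟨[(6, 2)], [], [(7, 6), (4, 7)]⟩, ⟨[(4, 2)], [], [(3, 4), (1, 3), (0, 1)]⟩,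
     ⟨[(5, 2)], [], [(7, 5), (4, 7)]⟩, ⟨[], [], [(5, 2), (7, 5), (6, 7)]⟩,
     ⟨[(4, 2)], [], [(7, 4), (5, 7)]⟩, ⟨[(0, 2), (1, 0), (3, 1)], [], [(1, 0), (3, 1)]⟩,
     ⟨[(0, 2), (1, 0)], [], [(1, 0), (3, 1)]⟩, ⟨[], [], [(6, 2), (7, 6), (3, 7)]⟩,
     ⟨[(0, 2), (1, 0), (3, 1), (7, 3)], [], [(1, 0), (1, 3)]⟩,
     ⟨[(6, 2), (7, 6)], [], [(3, 7), (1, 3)]⟩,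
     ⟨[(6, 2), (7, 6), (3, 7), (1, 3)], [], [(4, 3), (7, 4), (6, 7)]⟩,
     ⟨[], [], [(4, 2), (7, 4), (6, 7)]⟩, ⟨[(0, 2), (1, 0)], [], [(1, 0), (3, 1), (7, 3)]⟩,
     ⟨[(0, 2)], [], [(1, 0), (3, 1), (7, 3)]⟩, ⟨[(5, 2)], [], [(7, 5), (4, 7), (3, 4), (1, 3)]⟩,
     ⟨[(0, 2), (1, 0)], [], [(3, 1), (4, 3)]⟩, ⟨[], [(0, 2)], [(4, 2), (3, 4), (1, 3), (0, 1)]⟩]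
  refutations :=
    [.combine 4 [(1, 0), (1, 1), (1, 2), (1, 3)],
     .combine 8 [(2, 0), (1, 4), (1, 5), (1, 6)],
     .combine 2 [(1, 7)],
     .combine 8 [(2, 8), (1, 4), (1, 6), (2, 9)],
     .combine 4 [(2, 10), (2, 7), (1, 5), (1, 11)],
     .combine 2 [(1, 12)],
     .combine 8 [(2, 0), (1, 13), (1, 14), (1, 15)],
     .combine 48 [(12, 8), (4, 9), (13, 16), (12, 17), (3, 18), (12, 19)],
     .combine 10 [(5, 10), (1, 20), (2, 21), (5, 11), (2, 17)],
     .combine 8 [(1, 4), (1, 6), (3, 22)],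
     .combine 16 [(2, 4), (1, 6), (8, 7), (7, 23)],
     .combine 8 [(1, 24), (2, 3)],
     .combine 8 [(1, 20), (2, 21)],
     .combine 4 [(2, 25), (1, 12)],
     .combine 16 [(8, 10), (2, 20), (3, 26)],
     .combine 8 [(1, 27), (1, 28)],
     .combine 16 [(2, 4), (8, 7), (1, 6), (8, 10)],
     .combine 4 [(1, 8), (1, 4), (1, 10), (1, 5)],
     .combine 3 [(1, 29)],
     .combine 8 [(1, 30), (2, 12)],
     .combine 38 [(5, 20), (15, 9), (7, 26), (8, 16)],
     .split 0 10
       (.combine 80 [(20, 0), (10, 4), (1, 5), (5, 31), (16, 32)])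
       (.combine 48 [(6, 4), (1, 5), (8, 13), (3, 31), (3, 33)])]
  indices :=
    [2, 5, 2, 5, 2, 2, 11, 2, 11, 11, 2, 11, 5, 2, 5, 2, 2, 12, 11, 11, 11, 2, 2, 11, 5, 1, 1, 2,
     1, 1, 1, 9, 9, 2, 9, 0, 0, 1, 0, 1, 13, 13, 15, 2, 2, 14, 5, 4, 15, 2, 4, 4, 8, 19, 16, 2, 16,
     9, 9, 9, 9, 9, 3, 13, 3, 14, 14, 2, 3, 3, 3, 14, 4, 4, 17, 4, 4, 4, 8, 4, 18, 10, 10, 10, 5, 2,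
     5, 2, 2, 12, 11, 11, 11, 2, 2, 11, 5, 6, 6, 2, 0, 6, 6, 19, 0, 2, 0, 0, 0, 0, 0, 0, 13, 19, 14,
     2, 2, 20, 5, 7, 7, 2, 7, 7, 7, 18, 3, 3, 2, 0, 3, 3, 0, 19, 21, 21, 0, 21, 21, 21]

theorem fiberRoot_lemkeCore_2 : FiberRoot lemkeCore 2 8 85 :=
  Certificate.fiberRoot (C := coreCertificate2) (by decide +kernel)

def coreCertificate3 : Certificate 8 where
  tokens :=
    [[], [(7, 3)], [(4, 3)], [(1, 3)], [(7, 3), (6, 7)], [(7, 3), (5, 7)], [(4, 3), (2, 4)],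
     [(1, 3), (0, 1)], [(7, 3), (6, 7), (6, 7)], [(7, 3), (6, 7), (5, 7)], [(7, 3), (5, 7), (5, 7)],
     [(4, 3), (2, 4), (6, 2)], [(4, 3), (2, 4), (5, 2)], [(7, 3), (6, 7), (2, 6)],
     [(7, 3), (5, 7), (2, 5)], [(4, 3), (2, 4), (2, 4)], [(1, 3), (0, 1), (2, 0)],
     [(4, 3), (2, 4), (0, 2)], [(1, 3), (0, 1), (0, 1)], [(7, 3), (6, 7), (6, 7), (2, 6)],
     [(7, 3), (6, 7), (5, 7), (2, 5)], [(7, 3), (6, 7), (5, 7), (2, 6)],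
     [(7, 3), (5, 7), (5, 7), (2, 5)], [(4, 3), (2, 4), (6, 2), (2, 4)],
     [(4, 3), (2, 4), (5, 2), (2, 4)], [(1, 3), (0, 1), (2, 0), (6, 2)],
     [(1, 3), (0, 1), (2, 0), (5, 2)], [(4, 3), (2, 4), (6, 2), (0, 2)],
     [(4, 3), (2, 4), (5, 2), (0, 2)], [(7, 3), (6, 7), (2, 6), (0, 2)],
     [(7, 3), (5, 7), (2, 5), (0, 2)], [(4, 3), (2, 4), (2, 4), (0, 2)],
     [(1, 3), (0, 1), (2, 0), (0, 1)], [(7, 3), (6, 7), (6, 7), (2, 6), (0, 2)],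
     [(7, 3), (6, 7), (5, 7), (2, 5), (0, 2)], [(7, 3), (6, 7), (5, 7), (2, 6), (0, 2)],
     [(7, 3), (5, 7), (5, 7), (2, 5), (0, 2)], [(4, 3), (2, 4), (6, 2), (2, 4), (0, 2)],
     [(4, 3), (2, 4), (5, 2), (2, 4), (0, 2)], [(1, 3), (0, 1), (2, 0), (6, 2), (0, 1)],
     [(1, 3), (0, 1), (2, 0), (5, 2), (0, 1)]]
  plans :=
    [⟨[], [], [(1, 3)]⟩, ⟨[], [], [(4, 3), (2, 4), (0, 2)]⟩, ⟨[(1, 3), (0, 1)], [], [(0, 1)]⟩,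
     ⟨[], [], [(7, 3), (5, 7)]⟩, ⟨[(7, 3), (6, 7)], [], [(7, 6), (5, 7)]⟩,
     ⟨[(4, 3)], [], [(7, 4), (5, 7)]⟩, ⟨[(4, 3), (2, 4), (5, 2)], [], [(5, 2)]⟩, ⟨[], [], [(4, 3)]⟩,
     ⟨[(7, 3), (5, 7)], [], [(5, 7)]⟩, ⟨[(1, 3), (0, 1)], [], [(0, 1), (2, 0), (5, 2)]⟩,
     ⟨[(4, 3), (2, 4), (5, 2)], [], [(2, 4), (0, 2)]⟩,
     ⟨[(7, 3), (6, 7), (5, 7)], [], [(2, 6), (0, 2)]⟩, ⟨[], [], [(7, 3), (6, 7)]⟩,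
     ⟨[(4, 3)], [], [(7, 4), (6, 7)]⟩, ⟨[(7, 3), (5, 7)], [], [(7, 5), (6, 7)]⟩,
     ⟨[(4, 3), (2, 4), (6, 2)], [], [(6, 2)]⟩, ⟨[(1, 3)], [], [(0, 1), (2, 0), (5, 2)]⟩,
     ⟨[(4, 3), (2, 4), (6, 2)], [], [(2, 4), (2, 6), (5, 2)]⟩, ⟨[(7, 3), (6, 7)], [], [(6, 7)]⟩,
     ⟨[(1, 3), (0, 1)], [], [(0, 1), (2, 0), (6, 2)]⟩,
     ⟨[(4, 3), (2, 4), (6, 2)], [], [(2, 4), (0, 2)]⟩,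
     ⟨[(7, 3), (6, 7), (5, 7)], [], [(2, 5), (0, 2)]⟩,
     ⟨[(1, 3), (0, 1), (2, 0)], [], [(0, 1), (2, 0), (6, 2)]⟩,
     ⟨[(4, 3), (2, 4), (5, 2)], [], [(2, 4), (2, 5), (6, 2)]⟩,
     ⟨[(1, 3)], [], [(0, 1), (2, 0), (6, 2)]⟩, ⟨[(1, 3), (0, 1)], [], [(2, 0), (6, 2)]⟩,
     ⟨[(1, 3), (0, 1)], [], [(2, 0), (5, 2)]⟩, ⟨[(4, 3), (2, 4), (6, 2)], [], [(2, 6), (0, 2)]⟩,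
     ⟨[(4, 3), (2, 4), (5, 2)], [], [(2, 5), (0, 2)]⟩, ⟨[], [], [(1, 3), (0, 1)]⟩,
     ⟨[(4, 3), (2, 4), (5, 2)], [], [(2, 4), (2, 5), (0, 2)]⟩,
     ⟨[(7, 3), (6, 7)], [], [(6, 7), (2, 6), (0, 2)]⟩, ⟨[(1, 3)], [], [(0, 1), (2, 0)]⟩,
     ⟨[], [], [(7, 3), (4, 7), (2, 4)]⟩, ⟨[(1, 3), (0, 1), (2, 0), (5, 2)], [], [(0, 1), (0, 2)]⟩,
     ⟨[(1, 3)], [], [(0, 1)]⟩, ⟨[(7, 3), (5, 7)], [], [(2, 5), (0, 2)]⟩,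
     ⟨[], [], [(1, 3), (0, 1), (2, 0), (5, 2)]⟩, ⟨[(7, 3), (5, 7)], [], [(5, 7), (2, 5), (0, 2)]⟩,
     ⟨[(4, 3), (2, 4), (0, 2)], [], [(6, 2), (7, 6), (4, 7)]⟩,
     ⟨[(7, 3), (5, 7)], [], [(2, 5), (6, 2), (7, 6)]⟩,
     ⟨[(7, 3), (6, 7), (2, 6)], [], [(4, 2), (7, 4), (6, 7)]⟩,
     ⟨[(7, 3), (5, 7), (2, 5)], [], [(4, 2), (7, 4), (5, 7)]⟩, ⟨[], [], [(4, 3), (2, 4), (6, 2)]⟩,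
     ⟨[(4, 3), (2, 4), (5, 2)], [], [(2, 5), (6, 2)]⟩, ⟨[(4, 3)], [], [(2, 4), (6, 2)]⟩,
     ⟨[(1, 3)], [], [(0, 1), (2, 0), (6, 2), (7, 6)]⟩,
     ⟨[(1, 3), (0, 1), (2, 0), (5, 2)], [], [(2, 0), (5, 2)]⟩,
     ⟨[(4, 3), (2, 4), (0, 2)], [], [(2, 0), (5, 2)]⟩,
     ⟨[(1, 3), (0, 1), (2, 0)], [], [(0, 1), (2, 0)]⟩,
     ⟨[(4, 3), (2, 4), (6, 2)], [], [(2, 6), (5, 2)]⟩, ⟨[(4, 3)], [], [(2, 4), (0, 2), (1, 0)]⟩,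
     ⟨[(7, 3), (5, 7), (2, 5), (0, 2)], [], [(4, 2), (7, 4), (5, 7)]⟩,
     ⟨[], [], [(4, 3), (7, 4), (5, 7)]⟩, ⟨[(7, 3), (6, 7), (5, 7)], [], [(2, 5), (2, 6), (0, 2)]⟩,
     ⟨[], [], [(1, 3), (0, 1), (2, 0), (6, 2)]⟩, ⟨[(4, 3)], [], [(7, 4), (5, 7), (2, 5), (0, 2)]⟩,
     ⟨[], [], [(7, 3), (4, 7), (2, 4), (0, 2)]⟩,
     ⟨[(7, 3), (6, 7)], [], [(7, 6), (4, 7), (2, 4), (0, 2)]⟩, ⟨[(1, 3), (0, 1)], [], [(1, 0)]⟩,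
     ⟨[], [(4, 3), (4, 3)], [(1, 3), (0, 1)]⟩, ⟨[(7, 3), (6, 7)], [], [(2, 6), (0, 2), (1, 0)]⟩,
     ⟨[], [(1, 3), (1, 3)], [(4, 3), (7, 4), (5, 7)]⟩,
     ⟨[(4, 3), (2, 4), (6, 2)], [], [(0, 2), (1, 0)]⟩,
     ⟨[(4, 3), (2, 4), (5, 2)], [], [(0, 2), (1, 0)]⟩,
     ⟨[(1, 3), (0, 1), (2, 0), (5, 2)], [], [(7, 5), (4, 7), (2, 4), (0, 2)]⟩]
  refutations :=
    [.combine 2 [(1, 0)],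
     .combine 8 [(1, 1), (4, 2)],
     .combine 12 [(1, 3), (3, 4), (2, 5), (6, 6), (4, 7)],
     .combine 8 [(2, 3), (1, 4), (1, 8), (1, 9), (2, 10), (1, 11)],
     .combine 12 [(1, 12), (2, 13), (3, 14), (6, 15), (4, 7)],
     .combine 8 [(2, 3), (1, 16), (2, 17)],
     .combine 8 [(2, 12), (1, 14), (1, 18), (1, 19), (2, 20), (1, 21)],
     .combine 4 [(1, 22), (1, 23)],
     .combine 8 [(2, 12), (2, 13), (1, 24), (1, 25)],
     .combine 8 [(2, 3), (1, 16), (2, 5), (1, 26)],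
     .combine 4 [(2, 2), (2, 7), (1, 27), (1, 28)],
     .combine 28 [(5, 29), (1, 1), (4, 9), (6, 30)],
     .combine 8 [(2, 12), (1, 24), (2, 23), (2, 18)],
     .combine 4 [(1, 31), (2, 2)],
     .combine 8 [(2, 32), (1, 33)],
     .combine 4 [(1, 3), (1, 17), (1, 8)],
     .combine 4 [(1, 3), (1, 4), (1, 2), (1, 34), (1, 10)],
     .combine 12 [(6, 0), (1, 16), (3, 17), (6, 8)],
     .combine 8 [(2, 12), (2, 14), (1, 25), (4, 35)],
     .combine 5 [(1, 12), (1, 4), (3, 2), (1, 36)],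
     .combine 33 [(8, 4), (2, 37), (3, 9), (8, 10), (5, 38)],
     .combine 8 [(2, 12), (2, 13), (4, 2), (1, 39)],
     .combine 8 [(1, 40), (2, 12)],
     .combine 37 [(4, 41), (5, 33)],
     .combine 37 [(4, 42), (5, 33)],
     .combine 8 [(1, 13), (1, 43), (2, 44)],
     .combine 32 [(8, 12), (5, 13), (4, 40), (3, 45), (2, 46)],
     .combine 2 [(1, 47), (1, 0)],
     .combine 2 [(1, 7)],
     .combine 32 [(8, 12), (8, 13), (3, 40), (8, 48)],
     .combine 4 [(1, 49), (1, 33)],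
     .combine 8 [(1, 43), (2, 14), (1, 24), (1, 25), (2, 18)],
     .combine 8 [(2, 3), (2, 4), (1, 26), (4, 35)],
     .combine 16 [(1, 16), (4, 29), (4, 4), (2, 26), (4, 8)],
     .combine 4 [(1, 12), (1, 13), (1, 25)],
     .combine 4 [(1, 3), (1, 5), (1, 26)],
     .combine 8 [(2, 12), (1, 24), (1, 26), (1, 40)],
     .combine 96 [(11, 16), (12, 43), (10, 26), (14, 44), (17, 50), (6, 51)],
     .combine 4 [(1, 12), (1, 14), (2, 2), (1, 20)],
     .combine 8 [(1, 52), (1, 53)],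
     .combine 120 [(24, 12), (25, 13), (60, 2), (3, 53), (8, 39), (29, 36)],
     .combine 4 [(2, 49), (1, 1)],
     .combine 3 [(2, 2), (1, 3)],
     .combine 4 [(1, 54), (2, 2)],
     .combine 8 [(2, 29), (2, 2), (1, 31), (2, 20)],
     .combine 33 [(8, 14), (5, 31), (2, 55), (3, 19), (8, 20)],
     .combine 39 [(8, 3), (20, 2), (1, 1), (4, 39), (2, 56)],
     .combine 144 [(16, 13), (72, 2), (6, 1), (4, 39), (36, 36), (6, 57), (7, 58)],
     .split 4 10
       (.combine 12 [(2, 26), (3, 29)])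
       (.combine 8 [(2, 13), (2, 14), (3, 59), (2, 60)]),
     .split 1 10
       (.combine 72 [(18, 13), (14, 14), (18, 29), (4, 4), (12, 26), (3, 61)])
       (.combine 17 [(2, 13), (3, 14), (3, 4), (9, 35), (2, 62)]),
     .split 4 10
       (.combine 4 [(1, 14), (1, 29), (2, 15), (1, 35), (1, 18)])
       (.combine 8 [(2, 13), (2, 14), (1, 35), (2, 63), (2, 60)]),
     .split 4 10
       (.combine 8 [(2, 12), (2, 14), (1, 24), (2, 15), (1, 25)])
       (.combine 16 [(4, 13), (4, 14), (1, 24), (5, 15), (2, 25), (4, 60)]),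
     .split 4 10
       (.combine 4 [(1, 29), (1, 4), (2, 6), (1, 35), (1, 8)])
       (.combine 8 [(2, 4), (2, 5), (1, 35), (2, 60), (2, 64)]),
     .split 4 10
       (.combine 8 [(2, 3), (2, 4), (1, 16), (2, 6), (1, 26)])
       (.combine 16 [(4, 4), (1, 16), (4, 5), (5, 6), (2, 26), (4, 60)]),
     .split 1 10
       (.combine 572 [(35, 12), (75, 13), (24, 43), (108, 26), (30, 33), (55, 61), (29, 65)])
       (.combine 288 [(31, 24), (17, 25), (30, 61), (10, 51), (16, 65), (36, 62)])]
  indices :=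
    [12, 5, 28, 28, 28, 25, 28, 28, 15, 12, 22, 15, 12, 5, 15, 15, 28, 28, 28, 22, 12, 7, 15, 14,
     7, 5, 7, 0, 0, 0, 12, 0, 0, 5, 0, 0, 8, 0, 0, 2, 4, 4, 0, 2, 9, 2, 0, 0, 12, 0, 0, 22, 12, 12,
     0, 5, 17, 17, 0, 0, 23, 0, 24, 25, 26, 0, 0, 12, 0, 7, 27, 0, 14, 7, 5, 7, 6, 22, 12, 6, 15,
     15, 15, 28, 28, 4, 28, 28, 29, 4, 4, 28, 2, 2, 2, 13, 13, 13, 11, 43, 22, 44, 45, 11, 16, 20,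
     20, 28, 28, 23, 28, 24, 25, 29, 1, 1, 44, 1, 7, 11, 1, 30, 7, 11, 7, 0, 0, 8, 0, 0, 18, 18, 31,
     0, 32, 9, 33, 0, 0, 34, 50, 8, 0, 35, 48, 49, 50, 51, 52, 52, 9, 53, 0, 0, 8, 0, 9, 5, 36, 0,
     14, 8, 8, 9, 9, 37, 54, 1, 1, 6, 1, 1, 19, 38, 6, 1, 16, 3, 3, 28, 28, 21, 28, 39, 10, 40, 1,
     1, 44, 1, 11, 11, 1, 41, 7, 41, 7, 1, 1, 13, 13, 13, 1, 42, 43, 19, 44, 45, 16, 16, 20, 20, 28,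
     1, 1, 21, 1, 46, 10, 47, 1, 1, 1, 1, 11]

theorem fiberRoot_lemkeCore_3 : FiberRoot lemkeCore 3 8 85 :=
  Certificate.fiberRoot (C := coreCertificate3) (by decide +kernel)

def coreCertificate4 : Certificate 8 where
  tokens :=
    [[], [(7, 4)], [(3, 4)], [(2, 4)], [(7, 4), (6, 7)], [(7, 4), (5, 7)], [(2, 4), (6, 2)],
     [(2, 4), (5, 2)], [(3, 4), (1, 3)], [(2, 4), (0, 2)], [(2, 4), (6, 2), (6, 2)],
     [(2, 4), (6, 2), (5, 2)], [(2, 4), (5, 2), (5, 2)], [(3, 4), (1, 3), (1, 3)],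
     [(2, 4), (0, 2), (1, 0)], [(2, 4), (6, 2), (0, 2)], [(2, 4), (5, 2), (0, 2)],
     [(3, 4), (1, 3), (0, 1)], [(2, 4), (0, 2), (0, 2)], [(2, 4), (6, 2), (0, 2), (1, 0)],
     [(2, 4), (5, 2), (0, 2), (1, 0)], [(3, 4), (1, 3), (1, 3), (0, 1)],
     [(2, 4), (0, 2), (1, 0), (0, 2)]]
  plans :=
    [⟨[], [], [(3, 4), (1, 3)]⟩, ⟨[(3, 4), (1, 3)], [], [(1, 3)]⟩,
     ⟨[(2, 4), (0, 2), (1, 0)], [], [(0, 2), (1, 0)]⟩, ⟨[], [], [(3, 4)]⟩,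
     ⟨[(2, 4), (5, 2)], [], [(5, 2)]⟩, ⟨[], [], [(3, 4), (7, 3), (5, 7)]⟩,
     ⟨[(3, 4)], [], [(7, 3), (5, 7)]⟩, ⟨[(7, 4), (6, 7)], [], [(7, 6), (5, 7)]⟩,
     ⟨[], [], [(7, 4), (5, 7)]⟩, ⟨[(7, 4), (5, 7)], [], [(3, 7), (1, 3)]⟩,
     ⟨[(2, 4), (5, 2), (0, 2), (1, 0)], [], [(1, 0)]⟩, ⟨[], [], [(7, 4), (6, 7)]⟩,
     ⟨[(3, 4), (1, 3), (0, 1)], [], [(1, 0), (1, 3)]⟩,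
     ⟨[(2, 4), (6, 2)], [], [(2, 6), (0, 2), (1, 0)]⟩,
     ⟨[(2, 4), (5, 2), (0, 2), (1, 0)], [], [(7, 5), (6, 7)]⟩,
     ⟨[(3, 4), (1, 3)], [], [(1, 3), (0, 1)]⟩, ⟨[(2, 4), (6, 2)], [], [(6, 2)]⟩,
     ⟨[(7, 4), (6, 7)], [], [(3, 7), (1, 3)]⟩, ⟨[(2, 4), (6, 2), (0, 2), (1, 0)], [], [(1, 0)]⟩,
     ⟨[(3, 4)], [], [(1, 3), (0, 1)]⟩, ⟨[], [], [(2, 4), (0, 2)]⟩,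
     ⟨[(3, 4), (1, 3), (0, 1)], [], [(0, 1)]⟩, ⟨[(7, 4), (6, 7)], [], [(2, 6), (0, 2)]⟩,
     ⟨[(2, 4), (5, 2)], [], [(2, 5), (0, 2)]⟩, ⟨[(2, 4), (6, 2)], [], [(2, 6), (0, 2)]⟩,
     ⟨[], [], [(2, 4), (0, 2), (1, 0)]⟩, ⟨[(3, 4), (1, 3), (0, 1)], [], [(1, 3), (0, 1)]⟩,
     ⟨[(2, 4), (5, 2)], [], [(2, 5), (0, 2), (1, 0)]⟩,
     ⟨[(7, 4), (6, 7)], [], [(2, 6), (0, 2), (1, 0)]⟩,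
     ⟨[(2, 4), (5, 2), (0, 2)], [], [(7, 5), (6, 7)]⟩, ⟨[(2, 4), (0, 2)], [], [(0, 2), (1, 0)]⟩,
     ⟨[(3, 4), (1, 3)], [], [(3, 1), (7, 3), (5, 7)]⟩,
     ⟨[(3, 4), (1, 3)], [], [(3, 1), (7, 3), (6, 7)]⟩, ⟨[], [], [(3, 4), (7, 3), (6, 7)]⟩,
     ⟨[(2, 4), (0, 2), (1, 0)], [], [(2, 0), (6, 2), (7, 6)]⟩,
     ⟨[(7, 4), (5, 7)], [], [(2, 5), (6, 2), (7, 6)]⟩,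
     ⟨[(2, 4), (5, 2)], [], [(7, 5), (3, 7), (1, 3)]⟩, ⟨[(2, 4), (0, 2), (1, 0)], [], [(1, 0)]⟩,
     ⟨[(7, 4)], [], [(6, 7), (2, 6), (0, 2)]⟩, ⟨[], [], [(2, 4), (6, 2)]⟩,
     ⟨[(3, 4)], [], [(7, 3), (6, 7)]⟩, ⟨[(2, 4), (5, 2)], [], [(2, 5), (6, 2)]⟩,
     ⟨[(2, 4), (6, 2), (0, 2)], [], [(1, 0)]⟩, ⟨[(7, 4), (5, 7)], [], [(7, 5), (6, 7)]⟩,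
     ⟨[(2, 4), (5, 2), (0, 2)], [], [(1, 0)]⟩, ⟨[(2, 4), (5, 2), (0, 2)], [], [(1, 0), (3, 1)]⟩,
     ⟨[(7, 4), (5, 7)], [], [(5, 7)]⟩, ⟨[(7, 4)], [], [(5, 7), (2, 5), (0, 2)]⟩,
     ⟨[(7, 4), (5, 7)], [], [(2, 5), (0, 2), (1, 0)]⟩, ⟨[(2, 4)], [], [(5, 2), (7, 5), (6, 7)]⟩,
     ⟨[(7, 4), (5, 7)], [], [(2, 5), (6, 2), (7, 6), (3, 7)]⟩,
     ⟨[(2, 4), (0, 2), (1, 0)], [], [(2, 0), (5, 2), (7, 5)]⟩, ⟨[], [], [(2, 4), (5, 2), (7, 5)]⟩,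
     ⟨[], [], [(2, 4), (5, 2)]⟩, ⟨[(7, 4), (5, 7)], [], [(7, 5), (3, 7), (1, 3)]⟩,
     ⟨[(2, 4), (6, 2), (0, 2)], [], [(1, 0), (3, 1)]⟩,
     ⟨[(3, 4), (1, 3), (0, 1)], [], [(1, 0), (3, 1), (7, 3), (6, 7)]⟩,
     ⟨[(2, 4), (6, 2)], [], [(2, 6), (5, 2)]⟩, ⟨[(2, 4), (6, 2)], [], [(0, 2), (1, 0), (3, 1)]⟩,
     ⟨[(7, 4), (6, 7)], [], [(6, 7)]⟩, ⟨[(2, 4), (5, 2)], [], [(0, 2), (1, 0), (3, 1)]⟩,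
     ⟨[(2, 4), (0, 2)], [], [(2, 0), (6, 2), (7, 6), (5, 7)]⟩,
     ⟨[(2, 4), (6, 2)], [], [(7, 6), (3, 7), (1, 3)]⟩, ⟨[(2, 4)], [], [(0, 2), (1, 0), (3, 1)]⟩,
     ⟨[(2, 4), (0, 2)], [], [(1, 0), (3, 1), (7, 3), (5, 7)]⟩,
     ⟨[(3, 4), (1, 3)], [], [(0, 1), (2, 0), (5, 2), (7, 5)]⟩,
     ⟨[(3, 4)], [], [(1, 3), (0, 1), (2, 0), (5, 2)]⟩,
     ⟨[(7, 4), (6, 7)], [], [(2, 6), (0, 2), (1, 0), (3, 1)]⟩,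
     ⟨[], [], [(3, 4), (1, 3), (0, 1), (2, 0)]⟩, ⟨[(7, 4)], [], [(5, 7), (2, 5), (0, 2), (1, 0)]⟩,
     ⟨[(2, 4), (0, 2)], [], [(5, 2), (7, 5), (6, 7)]⟩,
     ⟨[(3, 4), (1, 3), (0, 1)], [], [(3, 1), (7, 3), (5, 7)]⟩,
     ⟨[(2, 4), (0, 2), (1, 0)], [], [(0, 1), (0, 2)]⟩,
     ⟨[(3, 4)], [], [(7, 3), (5, 7), (2, 5), (0, 2)]⟩]
  refutations :=
    [.combine 4 [(1, 0), (1, 1), (1, 2)],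
     .combine 2 [(1, 3)],
     .combine 8 [(4, 4), (1, 5), (1, 6), (2, 7)],
     .combine 8 [(2, 8), (3, 1), (4, 4), (1, 9), (4, 10)],
     .combine 48 [(12, 11), (9, 2), (4, 12), (3, 13), (12, 14), (16, 15)],
     .combine 8 [(2, 11), (3, 1), (4, 16), (1, 17), (4, 18)],
     .combine 4 [(1, 19), (1, 20), (1, 21), (1, 22)],
     .combine 12 [(2, 8), (3, 19), (1, 20), (3, 21), (2, 23), (3, 24)],
     .combine 8 [(1, 25), (2, 26), (1, 27), (1, 13)],
     .combine 16 [(4, 11), (4, 26), (1, 28), (4, 29), (5, 30)],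
     .combine 8 [(1, 31), (1, 5)],
     .combine 8 [(1, 32), (1, 33)],
     .combine 8 [(2, 11), (4, 1), (1, 34), (1, 35)],
     .combine 8 [(3, 1), (1, 25), (1, 28), (1, 36), (2, 37)],
     .combine 8 [(2, 0), (1, 19), (1, 27), (1, 13)],
     .combine 8 [(1, 38), (2, 20)],
     .combine 4 [(1, 0), (2, 16), (1, 17)],
     .combine 12 [(1, 11), (2, 0), (6, 16), (2, 17), (1, 32)],
     .combine 4 [(1, 0), (2, 4), (1, 9)],
     .combine 4 [(1, 39), (1, 40), (1, 41)],
     .combine 4 [(1, 11), (2, 16), (2, 42), (1, 43)],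
     .combine 4 [(1, 8), (2, 4), (2, 44), (1, 7)],
     .combine 76 [(19, 0), (38, 4), (3, 19), (2, 31), (19, 7), (18, 45), (17, 46)],
     .combine 15 [(2, 25), (4, 19), (2, 47), (1, 48)],
     .combine 4 [(1, 8), (1, 1), (1, 2), (1, 12)],
     .combine 8 [(1, 49), (2, 8)],
     .combine 32 [(7, 11), (1, 0), (4, 32), (3, 40), (2, 50)],
     .combine 8 [(1, 51), (1, 52)],
     .combine 4 [(2, 1), (1, 53), (1, 41)],
     .combine 24 [(6, 11), (9, 1), (2, 28), (4, 2), (3, 54)],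
     .combine 8 [(2, 0), (2, 1), (1, 27), (1, 13)],
     .combine 16 [(4, 11), (4, 16), (3, 40), (4, 41), (4, 55)],
     .combine 16 [(4, 11), (4, 16), (3, 40), (4, 41), (1, 56)],
     .combine 16 [(4, 8), (4, 4), (4, 57), (3, 6), (4, 45)],
     .combine 64 [(9, 19), (4, 20), (6, 5), (6, 47), (14, 22), (2, 50)],
     .combine 4 [(1, 8), (2, 12), (1, 7)],
     .combine 16 [(2, 5), (1, 31), (4, 7), (1, 56)],
     .combine 64 [(16, 0), (2, 19), (8, 17), (15, 42), (8, 58), (16, 43)],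
     .combine 76 [(19, 0), (19, 16), (3, 19), (19, 41), (2, 32), (18, 55), (36, 59)],
     .combine 64 [(16, 0), (2, 19), (8, 9), (16, 7), (15, 44), (8, 60)],
     .combine 79 [(20, 8), (8, 28), (4, 47), (5, 48), (3, 61)],
     .combine 22 [(6, 11), (4, 19), (2, 62), (3, 63)],
     .combine 2289 [(45, 36), (52, 50), (50, 64), (35, 65), (42, 66), (130, 67), (143, 68),
       (117, 69)],
     .combine 8 [(1, 70), (2, 8)],
     .combine 8 [(1, 71), (1, 5)],
     .combine 24 [(4, 8), (1, 5), (5, 40), (12, 21), (4, 22), (2, 70)],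
     .combine 4 [(2, 72), (1, 8)],
     .combine 8 [(1, 25), (1, 28), (3, 26)],
     .combine 3 [(1, 8), (1, 2), (1, 26)],
     .combine 24 [(6, 8), (8, 2), (8, 26), (5, 29)],
     .combine 4 [(1, 20), (1, 26), (1, 23)],
     .combine 24 [(6, 20), (6, 26), (2, 47), (5, 22), (4, 29)],
     .combine 4 [(1, 19), (1, 20), (1, 21), (1, 47)],
     .combine 64 [(2, 8), (14, 20), (32, 21), (1, 47), (13, 22), (11, 29), (4, 73)],
     .combine 4 [(1, 26), (1, 25)],
     .combine 8 [(1, 25), (2, 26), (1, 47), (1, 48)]]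
  indices :=
    [16, 18, 1, 1, 1, 19, 1, 1, 2, 25, 1, 1, 1, 25, 11, 10, 16, 20, 25, 10, 2, 1, 1, 11, 1, 1, 10,
     16, 17, 1, 18, 10, 2, 11, 10, 19, 25, 1, 1, 11, 1, 10, 19, 26, 11, 0, 16, 10, 0, 12, 5, 5, 0,
     3, 18, 3, 0, 0, 12, 0, 27, 28, 12, 0, 0, 0, 0, 5, 0, 0, 0, 29, 5, 5, 0, 3, 3, 3, 54, 0, 0, 13,
     0, 13, 30, 13, 16, 25, 20, 20, 25, 18, 2, 1, 1, 32, 1, 1, 2, 31, 32, 1, 33, 2, 2, 15, 15, 15,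
     15, 1, 1, 15, 1, 52, 19, 34, 11, 16, 20, 10, 46, 35, 20, 20, 46, 21, 21, 21, 1, 1, 11, 16, 17,
     1, 10, 14, 36, 37, 38, 18, 39, 22, 22, 15, 15, 15, 46, 23, 14, 40, 1, 23, 14, 41, 14, 23, 14,
     42, 0, 0, 4, 46, 24, 4, 4, 0, 0, 0, 4, 0, 24, 4, 4, 51, 15, 50, 43, 1, 1, 6, 1, 44, 7, 45, 15,
     46, 47, 46, 46, 8, 9, 46, 54, 54, 47, 54, 48, 8, 49, 15, 15, 15, 46, 50, 50, 51, 1, 6, 7, 6,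
     50, 52, 7, 53, 46, 54, 54, 9, 46, 55, 8, 9]

theorem fiberRoot_lemkeCore_4 : FiberRoot lemkeCore 4 8 85 :=
  Certificate.fiberRoot (C := coreCertificate4) (by decide +kernel)

def coreCertificate7 : Certificate 8 where
  tokens :=
    [[], [(6, 7)], [(5, 7)], [(4, 7)], [(3, 7)], [(6, 7), (2, 6)], [(5, 7), (2, 5)],
     [(4, 7), (2, 4)], [(3, 7), (1, 3)], [(4, 7), (2, 4), (2, 4)], [(3, 7), (1, 3), (1, 3)],
     [(6, 7), (2, 6), (0, 2)], [(5, 7), (2, 5), (0, 2)], [(4, 7), (2, 4), (0, 2)],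
     [(3, 7), (1, 3), (0, 1)], [(3, 7), (1, 3), (0, 1), (2, 0)], [(6, 7), (2, 6), (0, 2), (1, 0)],
     [(5, 7), (2, 5), (0, 2), (1, 0)], [(4, 7), (2, 4), (0, 2), (1, 0)],
     [(4, 7), (2, 4), (2, 4), (0, 2)], [(3, 7), (1, 3), (1, 3), (0, 1)],
     [(6, 7), (2, 6), (0, 2), (0, 2)], [(5, 7), (2, 5), (0, 2), (0, 2)],
     [(4, 7), (2, 4), (0, 2), (0, 2)], [(3, 7), (1, 3), (0, 1), (0, 1)],
     [(4, 7), (2, 4), (2, 4), (0, 2), (1, 0)], [(3, 7), (1, 3), (0, 1), (2, 0), (1, 3)],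
     [(3, 7), (1, 3), (0, 1), (2, 0), (0, 1)], [(6, 7), (2, 6), (0, 2), (1, 0), (0, 2)],
     [(5, 7), (2, 5), (0, 2), (1, 0), (0, 2)], [(4, 7), (2, 4), (0, 2), (1, 0), (0, 2)],
     [(4, 7), (2, 4), (2, 4), (0, 2), (0, 2)], [(3, 7), (1, 3), (1, 3), (0, 1), (0, 1)],
     [(3, 7), (1, 3), (0, 1), (2, 0), (1, 3), (0, 1)],
     [(4, 7), (2, 4), (2, 4), (0, 2), (0, 2), (0, 2)],
     [(3, 7), (1, 3), (1, 3), (0, 1), (0, 1), (0, 1)],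
     [(3, 7), (1, 3), (1, 3), (0, 1), (0, 1), (0, 1), (0, 1)]]
  plans :=
    [⟨[(4, 7), (2, 4), (0, 2)], [], [(2, 4), (0, 2)]⟩,
     ⟨[(3, 7), (1, 3), (0, 1)], [], [(1, 3), (0, 1)]⟩, ⟨[(6, 7)], [], [(2, 6), (0, 2)]⟩,
     ⟨[(5, 7)], [], [(2, 5), (0, 2)]⟩, ⟨[], [], [(5, 7), (2, 5), (0, 2)]⟩,
     ⟨[(3, 7)], [], [(1, 3), (0, 1)]⟩, ⟨[], [], [(3, 7), (1, 3)]⟩,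
     ⟨[(6, 7)], [], [(2, 6), (0, 2), (1, 0)]⟩, ⟨[(3, 7), (1, 3)], [], [(1, 3)]⟩,
     ⟨[(4, 7)], [], [(2, 4), (0, 2), (1, 0)]⟩, ⟨[], [], [(4, 7)]⟩,
     ⟨[(5, 7)], [], [(2, 5), (0, 2), (1, 0)]⟩, ⟨[(3, 7), (1, 3), (0, 1)], [], [(1, 0), (1, 3)]⟩,
     ⟨[], [], [(4, 7), (3, 4), (1, 3)]⟩, ⟨[], [], [(3, 7), (4, 3)]⟩,
     ⟨[(5, 7)], [], [(2, 5), (4, 2), (3, 4)]⟩,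
     ⟨[(3, 7), (1, 3), (0, 1)], [], [(1, 0), (3, 1), (4, 3)]⟩, ⟨[(3, 7)], [], [(4, 3)]⟩,
     ⟨[], [], [(4, 7), (3, 4)]⟩, ⟨[(6, 7), (2, 6), (0, 2), (1, 0)], [], [(0, 2), (1, 0)]⟩,
     ⟨[], [], [(5, 7)]⟩, ⟨[], [], [(4, 7), (2, 4), (5, 2)]⟩, ⟨[(6, 7)], [], [(2, 6), (5, 2)]⟩,
     ⟨[(4, 7)], [], [(3, 4), (1, 3)]⟩, ⟨[(3, 7), (1, 3)], [], [(0, 1), (2, 0)]⟩,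
     ⟨[], [], [(3, 7), (4, 3), (2, 4)]⟩, ⟨[], [], [(5, 7), (2, 5), (6, 2)]⟩,
     ⟨[(3, 7), (1, 3)], [], [(4, 3), (2, 4), (5, 2)]⟩,
     ⟨[(6, 7), (2, 6), (0, 2), (1, 0)], [], [(2, 0), (5, 2)]⟩,
     ⟨[(6, 7), (2, 6), (0, 2), (1, 0)], [], [(1, 0)]⟩, ⟨[(4, 7)], [], [(3, 4), (1, 3), (0, 1)]⟩,
     ⟨[(3, 7), (1, 3), (0, 1)], [], [(3, 1), (4, 3)]⟩, ⟨[], [], [(4, 7), (2, 4), (0, 2)]⟩,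
     ⟨[(3, 7)], [], [(1, 3)]⟩, ⟨[(3, 7), (1, 3)], [], [(3, 1), (4, 3), (2, 4), (6, 2)]⟩,
     ⟨[(4, 7), (2, 4), (0, 2), (1, 0)], [], [(0, 1), (2, 0), (2, 4)]⟩,
     ⟨[(3, 7), (1, 3)], [], [(4, 3), (2, 4), (6, 2)]⟩, ⟨[], [], [(4, 7), (2, 4), (6, 2)]⟩,
     ⟨[(4, 7), (2, 4), (0, 2), (1, 0)], [], [(2, 0), (2, 4)]⟩,
     ⟨[(6, 7), (2, 6), (0, 2), (1, 0)], [], [(0, 1), (2, 0), (4, 2)]⟩,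
     ⟨[], [(4, 7), (4, 7)], [(5, 7)]⟩, ⟨[(5, 7)], [], [(2, 5), (0, 2), (1, 0), (3, 1)]⟩,
     ⟨[(6, 7)], [], [(2, 6), (0, 2), (1, 0), (3, 1)]⟩, ⟨[(3, 7), (1, 3)], [], [(0, 1)]⟩,
     ⟨[], [(5, 7)], [(4, 7), (3, 4), (1, 3), (0, 1)]⟩,
     ⟨[(6, 7), (2, 6), (0, 2)], [], [(1, 0), (3, 1), (4, 3), (2, 4)]⟩,
     ⟨[(3, 7), (1, 3)], [], [(0, 1), (2, 0), (5, 2)]⟩,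
     ⟨[(3, 7)], [], [(1, 3), (0, 1), (2, 0), (4, 2)]⟩, ⟨[], [(5, 7), (5, 7)], [(4, 7), (3, 4)]⟩,
     ⟨[(4, 7)], [], [(2, 4), (0, 2)]⟩, ⟨[(3, 7), (1, 3), (0, 1)], [], [(0, 1)]⟩,
     ⟨[], [(5, 7), (5, 7), (5, 7)], [(4, 7), (3, 4), (1, 3)]⟩,
     ⟨[], [(5, 7), (5, 7), (5, 7)], [(6, 7)]⟩, ⟨[(6, 7), (2, 6), (0, 2)], [], [(0, 2), (1, 0)]⟩,
     ⟨[], [(4, 7), (4, 7), (5, 7), (5, 7)], [(6, 7)]⟩, ⟨[(3, 7), (1, 3)], [], [(1, 3), (0, 1)]⟩,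
     ⟨[], [(6, 7), (6, 7)], [(4, 7), (3, 4), (1, 3), (0, 1)]⟩,
     ⟨[], [(5, 7), (5, 7), (5, 7), (6, 7), (6, 7), (6, 7)], [(4, 7), (3, 4), (1, 3), (0, 1)]⟩,
     ⟨[], [], [(6, 7)]⟩]
  refutations :=
    [.combine 2 [(1, 0), (1, 1)],
     .combine 8 [(2, 2), (1, 3), (1, 4), (2, 5)],
     .combine 4 [(1, 6)],
     .combine 8 [(1, 7), (4, 8), (1, 9)],
     .combine 2 [(1, 10)],
     .combine 16 [(2, 11), (1, 8), (5, 12), (1, 9), (2, 13)],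
     .combine 96 [(24, 2), (4, 14), (12, 15), (9, 16), (19, 17), (20, 18)],
     .combine 8 [(1, 7), (2, 8), (2, 12), (1, 19), (4, 20)],
     .combine 8 [(1, 21), (2, 22)],
     .combine 20 [(5, 6), (5, 22), (4, 23), (2, 15)],
     .combine 8 [(2, 24), (1, 25)],
     .combine 8 [(1, 11), (3, 8), (1, 23), (1, 21)],
     .combine 16 [(2, 11), (4, 1), (8, 10), (1, 9)],
     .combine 32 [(5, 8), (7, 22), (7, 23), (4, 26), (1, 27), (8, 28)],
     .combine 8 [(1, 11), (1, 7), (3, 8), (4, 10), (1, 23), (2, 29)],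
     .combine 8 [(1, 7), (2, 6), (1, 5), (1, 9)],
     .combine 8 [(1, 7), (2, 8), (4, 10), (2, 12), (1, 19)],
     .combine 24 [(6, 2), (1, 30), (3, 5), (4, 31), (3, 32)],
     .combine 4 [(1, 6), (1, 22), (1, 33)],
     .combine 16 [(1, 34), (4, 14)],
     .combine 4 [(1, 35)],
     .combine 8 [(1, 36), (1, 37)],
     .combine 8 [(1, 27), (1, 21)],
     .combine 2 [(1, 38), (1, 8)],
     .combine 8 [(1, 11), (1, 7), (2, 6), (2, 12)],
     .combine 8 [(1, 11), (1, 7), (2, 6), (1, 5)],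
     .combine 64 [(4, 11), (8, 7), (7, 30), (8, 4), (5, 39)],
     .combine 8 [(1, 11), (4, 10), (3, 12)],
     .combine 4 [(2, 12), (1, 6)],
     .combine 24 [(3, 1), (12, 10), (1, 30), (6, 2), (6, 3), (4, 31)],
     .combine 8 [(2, 2), (4, 20), (1, 3), (2, 5)],
     .split 4 10
       (.combine 2 [(1, 20), (1, 8)])
       (.combine 8 [(1, 7), (2, 8), (2, 23), (4, 40)]),
     .split 4 10
       (.combine 8 [(1, 11), (1, 7), (2, 6), (2, 12)])
       (.combine 16 [(1, 11), (2, 7), (2, 30), (4, 12), (8, 40)]),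
     .split 5 10
       (.combine 9 [(2, 6), (1, 30), (1, 16)])
       (.combine 48 [(3, 30), (4, 5), (1, 16), (3, 41), (3, 42), (6, 43), (3, 44)]),
     .split 4 10
       (.combine 112 [(28, 6), (7, 5), (7, 41), (7, 42), (3, 45)])
       (.combine 580 [(57, 30), (21, 41), (22, 21), (36, 42), (203, 40), (10, 45), (18, 46),
          (16, 47)]),
     .split 5 10
       (.combine 8 [(2, 2), (2, 31), (1, 17), (2, 18)])
       (.combine 8 [(2, 2), (2, 3), (2, 31), (1, 17), (2, 48)]),
     .split 4 10
       (.combine 8 [(2, 1), (2, 2), (1, 3), (1, 4)])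
       (.combine 8 [(2, 1), (2, 2), (1, 3), (4, 40), (2, 49)]),
     .split 5 10
       (.combine 16 [(4, 2), (2, 5), (4, 14), (6, 50), (3, 49)])
       (.combine 16 [(4, 2), (1, 30), (4, 3), (2, 5), (4, 50), (1, 44)]),
     .split 5 12
       (.split 4 10
          (.combine 4 [(1, 8), (1, 6), (1, 19)])
          (.combine 8 [(1, 7), (2, 8), (1, 19), (2, 23), (4, 40)]))
       (.combine 8 [(1, 11), (1, 7), (2, 8), (1, 23), (1, 51)]),
     .split 5 12
       (.split 4 10
          (.combine 8 [(1, 7), (2, 6), (2, 12), (1, 19)])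
          (.combine 16 [(2, 7), (1, 8), (2, 30), (3, 12), (2, 19), (8, 40)]))
       (.combine 16 [(2, 11), (1, 7), (1, 8), (2, 30), (3, 12), (1, 19), (8, 52)]),
     .split 4 10
       (.combine 16 [(1, 11), (2, 7), (4, 1), (8, 20)])
       (.split 5 10
          (.combine 8 [(1, 7), (2, 1), (4, 10), (1, 53)])
          (.combine 16 [(3, 11), (1, 7), (2, 1), (2, 30), (8, 54)])),
     .split 4 10
       (.combine 16 [(1, 11), (2, 7), (4, 1), (2, 53), (2, 4)])
       (.split 5 10
          (.combine 16 [(2, 7), (4, 1), (8, 10), (3, 53), (1, 9)])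
          (.combine 16 [(2, 11), (1, 7), (2, 1), (2, 30), (3, 53), (8, 54)])),
     .split 5 12
       (.split 6 12
          (.combine 16 [(2, 12), (1, 30), (4, 19), (2, 13), (3, 55)])
          (.combine 16 [(2, 7), (1, 30), (2, 19), (4, 55), (1, 56)]))
       (.split 4 10
          (.combine 16 [(2, 11), (2, 7), (5, 55), (2, 51)])
          (.combine 48 [(3, 11), (4, 12), (6, 30), (9, 19), (24, 40), (10, 55), (48, 57)])),
     .split 4 12
       (.split 5 12
          (.combine 6 [(2, 1), (2, 19), (3, 58)])
          (.combine 14 [(3, 11), (1, 7), (5, 1), (7, 52)]))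
       (.split 5 10
          (.combine 16 [(2, 7), (5, 1), (8, 10), (3, 19)])
          (.combine 9 [(1, 11), (2, 1), (2, 19), (1, 30), (9, 54)]))]
  indices :=
    [4, 4, 8, 4, 4, 8, 10, 4, 2, 2, 2, 9, 8, 4, 4, 8, 2, 2, 18, 2, 19, 9, 9, 2, 20, 10, 2, 2, 2,
     31, 2, 2, 13, 2, 21, 22, 13, 2, 23, 2, 2, 7, 2, 3, 5, 38, 2, 3, 11, 14, 3, 3, 11, 14, 23, 3, 4,
     30, 4, 4, 6, 8, 4, 4, 8, 1, 1, 1, 4, 6, 6, 6, 1, 1, 1, 27, 4, 4, 32, 2, 2, 25, 2, 15, 5, 33, 3,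
     27, 1, 4, 3, 27, 26, 2, 1, 1, 1, 10, 15, 33, 34, 3, 3, 2, 2, 24, 2, 16, 27, 39, 2, 24, 2, 28,
     28, 7, 28, 16, 5, 42, 28, 30, 4, 4, 29, 1, 30, 30, 4, 35, 35, 35, 0, 0, 0, 40, 27, 40, 4, 40,
     12, 40, 0, 0, 2, 7, 12, 43, 0, 43, 12, 43, 0, 0, 1, 1, 1, 4, 17, 36, 36, 0, 1, 1, 1, 0, 17, 37,
     37, 0, 0, 0, 0, 41, 12, 41, 0, 41, 12, 41, 0, 0, 0, 0, 0, 0, 0, 0, 0, 0, 0, 0, 0, 0]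

theorem fiberRoot_lemkeCore_7 : FiberRoot lemkeCore 7 8 85 :=
  Certificate.fiberRoot (C := coreCertificate7) (by decide +kernel)

def lemkeLCertificate1 : Certificate 8 where
  tokens :=
    [[], [(3, 1)], [(0, 1)], [(3, 1), (7, 3)], [(3, 1), (6, 3)], [(3, 1), (5, 3)],
     [(3, 1), (4, 3)], [(0, 1), (2, 0)], [(3, 1), (7, 3), (7, 3)], [(3, 1), (7, 3), (6, 3)],
     [(3, 1), (6, 3), (6, 3)], [(3, 1), (7, 3), (5, 3)], [(3, 1), (6, 3), (5, 3)],
     [(3, 1), (5, 3), (5, 3)], [(3, 1), (7, 3), (4, 3)], [(3, 1), (6, 3), (4, 3)],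
     [(3, 1), (5, 3), (4, 3)], [(3, 1), (4, 3), (4, 3)], [(3, 1), (6, 3), (2, 6)],
     [(3, 1), (5, 3), (2, 5)], [(3, 1), (4, 3), (2, 4)], [(0, 1), (2, 0), (2, 0)],
     [(0, 1), (2, 0), (6, 2)], [(0, 1), (2, 0), (5, 2)], [(0, 1), (2, 0), (4, 2)],
     [(3, 1), (7, 3), (6, 3), (2, 6)], [(3, 1), (6, 3), (6, 3), (2, 6)],
     [(3, 1), (7, 3), (5, 3), (2, 5)], [(3, 1), (6, 3), (5, 3), (2, 5)],
     [(3, 1), (6, 3), (5, 3), (2, 6)], [(3, 1), (5, 3), (5, 3), (2, 5)],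
     [(3, 1), (7, 3), (4, 3), (2, 4)], [(3, 1), (6, 3), (4, 3), (2, 4)],
     [(3, 1), (5, 3), (4, 3), (2, 4)], [(3, 1), (6, 3), (4, 3), (2, 6)],
     [(3, 1), (5, 3), (4, 3), (2, 5)], [(3, 1), (4, 3), (4, 3), (2, 4)],
     [(0, 1), (2, 0), (6, 2), (2, 0)], [(0, 1), (2, 0), (5, 2), (2, 0)],
     [(0, 1), (2, 0), (4, 2), (2, 0)], [(0, 1), (2, 0), (6, 2), (7, 6)],
     [(0, 1), (2, 0), (5, 2), (7, 5)], [(0, 1), (2, 0), (4, 2), (7, 4)]]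
  plans :=
    [⟨[], [], [(3, 1), (4, 3)]⟩, ⟨[], [], [(0, 1)]⟩,
     ⟨[(3, 1), (6, 3), (4, 3)], [], [(7, 4), (7, 6), (5, 7)]⟩,
     ⟨[(3, 1), (5, 3)], [], [(7, 3), (7, 5), (6, 7)]⟩,
     ⟨[(0, 1), (2, 0), (6, 2), (7, 6)], [], [(0, 2)]⟩,
     ⟨[(3, 1), (5, 3)], [], [(3, 5), (6, 3), (7, 6)]⟩, ⟨[], [], [(3, 1), (6, 3), (7, 6)]⟩,
     ⟨[], [], [(3, 1), (5, 3), (7, 5)]⟩,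
     ⟨[(0, 1), (2, 0), (5, 2)], [], [(2, 0), (5, 2), (7, 5), (6, 7)]⟩,
     ⟨[(3, 1), (6, 3), (2, 6)], [], [(5, 2), (5, 3), (7, 5), (4, 7)]⟩, ⟨[], [], [(3, 1), (5, 3)]⟩,
     ⟨[(0, 1), (2, 0), (4, 2)], [], [(2, 0), (2, 4), (5, 2)]⟩,
     ⟨[(3, 1), (5, 3)], [], [(5, 3), (2, 5), (6, 2)]⟩, ⟨[], [], [(3, 1), (4, 3), (7, 4)]⟩,
     ⟨[(3, 1), (6, 3), (5, 3)], [], [(7, 5), (7, 6), (4, 7)]⟩,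
     ⟨[(0, 1), (2, 0), (4, 2)], [], [(2, 0), (4, 2), (7, 4), (5, 7)]⟩,
     ⟨[(3, 1), (6, 3), (2, 6)], [], [(4, 2), (4, 3), (7, 4), (5, 7)]⟩,
     ⟨[], [], [(0, 1), (2, 0), (6, 2)]⟩, ⟨[(3, 1), (5, 3), (4, 3)], [], [(7, 4), (7, 5), (6, 7)]⟩,
     ⟨[(3, 1), (6, 3)], [], [(6, 3)]⟩, ⟨[(0, 1), (2, 0), (6, 2)], [], [(0, 2)]⟩,
     ⟨[], [], [(0, 1), (2, 0), (5, 2)]⟩, ⟨[(3, 1), (5, 3)], [], [(5, 3)]⟩,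
     ⟨[(0, 1), (2, 0), (5, 2)], [], [(0, 2)]⟩, ⟨[(3, 1), (4, 3)], [], [(4, 3)]⟩,
     ⟨[], [], [(0, 1), (2, 0), (4, 2)]⟩, ⟨[(3, 1), (4, 3)], [], [(3, 4), (5, 3), (7, 5)]⟩,
     ⟨[(3, 1), (7, 3), (4, 3), (2, 4)], [], [(6, 2), (7, 6), (4, 7)]⟩,
     ⟨[(3, 1), (4, 3)], [], [(7, 3), (7, 4), (6, 7)]⟩,
     ⟨[(3, 1), (7, 3), (4, 3), (2, 4)], [], [(5, 2), (7, 5), (4, 7)]⟩,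
     ⟨[(3, 1), (4, 3)], [], [(7, 3), (7, 4), (5, 7)]⟩,
     ⟨[(0, 1), (2, 0), (4, 2)], [], [(2, 0), (2, 4), (6, 2)]⟩,
     ⟨[(3, 1), (6, 3)], [], [(6, 3), (2, 6), (4, 2)]⟩,
     ⟨[(0, 1), (2, 0), (6, 2)], [], [(2, 0), (2, 6), (4, 2)]⟩,
     ⟨[(3, 1), (4, 3)], [], [(4, 3), (2, 4), (5, 2)]⟩,
     ⟨[(3, 1), (5, 3), (2, 5)], [], [(4, 3), (2, 4), (5, 2), (7, 5)]⟩,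
     ⟨[(0, 1), (2, 0)], [], [(2, 0), (5, 2), (7, 5)]⟩, ⟨[(0, 1)], [], [(2, 0), (4, 2), (7, 4)]⟩,
     ⟨[], [], [(3, 1), (7, 3)]⟩, ⟨[(3, 1), (6, 3), (2, 6)], [], [(6, 2), (6, 3), (7, 6)]⟩,
     ⟨[(3, 1), (7, 3), (5, 3), (2, 5)], [], [(6, 2), (7, 6), (5, 7)]⟩,
     ⟨[(3, 1), (5, 3)], [], [(5, 3), (7, 5), (6, 7)]⟩,
     ⟨[(0, 1), (2, 0), (6, 2), (7, 6)], [], [(2, 0), (4, 2), (7, 4), (5, 7)]⟩,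
     ⟨[(0, 1), (2, 0), (6, 2)], [], [(2, 0), (2, 6), (4, 2), (7, 4)]⟩,
     ⟨[(3, 1), (4, 3)], [], [(4, 3), (7, 4), (6, 7)]⟩,
     ⟨[(3, 1), (4, 3)], [], [(4, 3), (7, 4), (5, 7)]⟩,
     ⟨[(0, 1), (2, 0), (4, 2), (7, 4)], [], [(2, 0), (2, 4)]⟩,
     ⟨[], [], [(3, 1), (7, 3), (6, 7), (2, 6)]⟩,
     ⟨[(3, 1), (6, 3), (5, 3), (2, 6)], [], [(2, 5), (4, 2), (7, 4), (6, 7)]⟩,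
     ⟨[(3, 1), (6, 3), (2, 6)], [], [(4, 3), (2, 4), (5, 2), (7, 5)]⟩, ⟨[], [], [(0, 1), (2, 0)]⟩,
     ⟨[(3, 1), (7, 3)], [], [(7, 3), (5, 7), (2, 5)]⟩,
     ⟨[(3, 1), (6, 3), (2, 6)], [], [(5, 3), (2, 5), (6, 2), (7, 6)]⟩,
     ⟨[(3, 1), (6, 3), (2, 6)], [], [(4, 3), (2, 4), (6, 2), (7, 6)]⟩,
     ⟨[(0, 1), (2, 0), (6, 2)], [], [(6, 2), (7, 6), (5, 7)]⟩,
     ⟨[(3, 1), (6, 3)], [], [(6, 3), (7, 6), (5, 7)]⟩,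
     ⟨[(0, 1), (2, 0), (5, 2)], [], [(5, 2), (7, 5), (6, 7)]⟩,
     ⟨[(0, 1), (2, 0), (4, 2), (7, 4)], [], [(6, 2), (7, 6), (4, 7)]⟩,
     ⟨[(0, 1), (2, 0), (4, 2), (7, 4)], [], [(5, 2), (7, 5), (4, 7)]⟩,
     ⟨[(0, 1)], [], [(2, 0), (5, 2), (7, 5), (4, 7)]⟩,
     ⟨[(0, 1), (2, 0), (5, 2)], [], [(5, 2), (7, 5), (4, 7)]⟩,
     ⟨[(3, 1), (5, 3)], [], [(5, 3), (7, 5), (4, 7)]⟩,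
     ⟨[(0, 1), (2, 0), (4, 2)], [], [(4, 2), (7, 4), (6, 7)]⟩,
     ⟨[(0, 1), (2, 0), (4, 2)], [], [(4, 2), (7, 4), (5, 7)]⟩,
     ⟨[(0, 1), (2, 0), (4, 2)], [], [(0, 2)]⟩, ⟨[(3, 1), (4, 3)], [], [(3, 4), (6, 3), (7, 6)]⟩,
     ⟨[(0, 1), (2, 0), (5, 2)], [], [(2, 0), (2, 5), (6, 2)]⟩,
     ⟨[(3, 1), (7, 3)], [], [(7, 3), (6, 7), (2, 6)]⟩,
     ⟨[(0, 1), (2, 0), (6, 2)], [], [(2, 0), (5, 2), (7, 5), (6, 7)]⟩,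
     ⟨[(3, 1), (6, 3)], [], [(6, 3), (2, 6), (5, 2)]⟩,
     ⟨[(0, 1), (2, 0), (5, 2), (7, 5)], [], [(2, 0), (6, 2), (6, 7)]⟩,
     ⟨[(3, 1), (5, 3), (2, 5)], [], [(5, 2), (5, 3), (7, 5)]⟩,
     ⟨[(0, 1), (2, 0), (6, 2), (7, 6)], [], [(2, 0), (5, 2), (5, 7)]⟩,
     ⟨[(3, 1), (7, 3)], [], [(7, 3), (4, 7), (2, 4)]⟩,
     ⟨[(0, 1), (2, 0), (6, 2)], [], [(2, 0), (4, 2), (7, 4), (6, 7)]⟩,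
     ⟨[(3, 1), (6, 3)], [], [(6, 3), (7, 6), (4, 7)]⟩,
     ⟨[(0, 1), (2, 0), (4, 2), (7, 4)], [], [(2, 0), (6, 2), (6, 7)]⟩,
     ⟨[], [], [(0, 1), (2, 0), (4, 2), (7, 4)]⟩,
     ⟨[(3, 1), (5, 3), (2, 5)], [], [(6, 2), (6, 3), (7, 6), (4, 7)]⟩,
     ⟨[(0, 1), (2, 0), (5, 2)], [], [(2, 0), (4, 2), (7, 4), (5, 7)]⟩,
     ⟨[(3, 1), (5, 3)], [], [(5, 3), (2, 5), (4, 2)]⟩,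
     ⟨[(0, 1), (2, 0), (4, 2), (7, 4)], [], [(2, 0), (5, 2), (5, 7)]⟩,
     ⟨[(3, 1), (4, 3), (2, 4)], [], [(4, 2), (4, 3), (7, 4)]⟩,
     ⟨[(3, 1), (4, 3)], [], [(4, 3), (2, 4), (6, 2)]⟩,
     ⟨[(0, 1), (2, 0), (6, 2), (7, 6)], [], [(2, 0), (4, 2), (4, 7)]⟩,
     ⟨[(0, 1), (2, 0), (5, 2), (7, 5)], [], [(2, 0), (4, 2), (4, 7)]⟩,
     ⟨[(3, 1), (5, 3)], [], [(2, 5), (4, 2), (3, 4), (6, 3)]⟩,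
     ⟨[(3, 1), (4, 3)], [], [(2, 4), (5, 2), (3, 5), (6, 3)]⟩,
     ⟨[(3, 1), (4, 3)], [], [(3, 4), (5, 3), (7, 5), (6, 7)]⟩,
     ⟨[(3, 1), (5, 3), (2, 5)], [], [(6, 2), (3, 6), (4, 3), (7, 4)]⟩,
     ⟨[(0, 1), (2, 0), (6, 2)], [], [(2, 0), (6, 2), (7, 6)]⟩,
     ⟨[(0, 1), (2, 0), (5, 2)], [], [(2, 0), (5, 2), (7, 5)]⟩,
     ⟨[(0, 1), (2, 0), (4, 2)], [], [(2, 0), (4, 2), (7, 4)]⟩,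
     ⟨[(0, 1), (2, 0)], [], [(2, 0), (6, 2), (7, 6)]⟩,
     ⟨[(0, 1), (2, 0)], [], [(2, 0), (4, 2), (7, 4)]⟩,
     ⟨[(3, 1), (5, 3)], [], [(4, 3), (2, 4), (2, 5), (6, 2)]⟩, ⟨[(0, 1), (2, 0)], [], [(2, 0)]⟩,
     ⟨[(0, 1), (2, 0), (6, 2), (7, 6)], [], [(6, 2), (7, 6)]⟩,
     ⟨[(0, 1), (2, 0), (5, 2), (7, 5)], [], [(5, 2), (7, 5)]⟩,
     ⟨[(0, 1), (2, 0), (4, 2), (7, 4)], [], [(4, 2), (7, 4)]⟩,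
     ⟨[(0, 1)], [], [(2, 0), (6, 2), (7, 6), (4, 7)]⟩,
     ⟨[(0, 1), (2, 0), (6, 2)], [], [(4, 2), (7, 4), (6, 7)]⟩, ⟨[], [], [(3, 1), (6, 3)]⟩,
     ⟨[(0, 1)], [], [(2, 0), (4, 2), (3, 4), (5, 3)]⟩,
     ⟨[(3, 1), (4, 3)], [], [(7, 4), (5, 7), (3, 5), (6, 3)]⟩,
     ⟨[(0, 1), (2, 0), (5, 2)], [], [(7, 5), (6, 7), (2, 6), (0, 2)]⟩,
     ⟨[(0, 1), (2, 0), (4, 2)], [], [(7, 4), (6, 7), (2, 6), (0, 2)]⟩,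
     ⟨[(0, 1), (2, 0), (4, 2)], [], [(7, 4), (5, 7), (2, 5), (0, 2)]⟩,
     ⟨[(0, 1)], [], [(2, 0), (4, 2)]⟩, ⟨[(0, 1)], [], [(2, 0), (6, 2), (3, 6), (7, 3)]⟩,
     ⟨[(0, 1)], [], [(2, 0), (5, 2), (3, 5), (7, 3)]⟩,
     ⟨[(0, 1)], [], [(2, 0), (5, 2), (3, 5), (6, 3)]⟩,
     ⟨[(0, 1), (2, 0), (5, 2)], [], [(3, 5), (6, 3), (2, 6), (0, 2)]⟩,
     ⟨[(0, 1), (2, 0), (6, 2)], [], [(3, 6), (5, 3), (2, 5), (0, 2)]⟩,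
     ⟨[(0, 1)], [], [(2, 0), (4, 2), (3, 4), (6, 3)]⟩,
     ⟨[(0, 1), (2, 0), (4, 2)], [], [(3, 4), (6, 3), (2, 6), (0, 2)]⟩,
     ⟨[(0, 1), (2, 0), (6, 2)], [], [(3, 6), (4, 3), (2, 4), (0, 2)]⟩,
     ⟨[(0, 1), (2, 0), (5, 2)], [], [(3, 5), (4, 3), (2, 4), (0, 2)]⟩,
     ⟨[(0, 1), (2, 0), (4, 2)], [], [(3, 4), (5, 3), (2, 5), (0, 2)]⟩,
     ⟨[], [], [(3, 1), (4, 3), (2, 4), (5, 2)]⟩, ⟨[(3, 1)], [], [(7, 3), (4, 7), (2, 4), (0, 2)]⟩,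
     ⟨[(3, 1), (4, 3)], [], [(7, 4), (5, 7), (2, 5), (0, 2)]⟩,
     ⟨[(3, 1), (6, 3)], [], [(7, 6), (4, 7), (2, 4), (0, 2)]⟩]
  refutations :=
    [.combine 4 [(1, 0)],
     .combine 4 [(2, 1), (1, 2), (1, 3), (2, 4)],
     .combine 8 [(1, 5), (1, 6)],
     .combine 16 [(2, 7), (4, 2), (1, 8), (1, 9)],
     .combine 8 [(2, 10), (2, 11), (1, 12)],
     .combine 16 [(2, 13), (4, 14), (1, 15), (1, 16)],
     .combine 8 [(1, 17), (2, 18), (4, 19), (3, 20)],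
     .combine 8 [(2, 2), (1, 21), (4, 22), (3, 23)],
     .combine 4 [(2, 24), (1, 25)],
     .combine 8 [(1, 26), (1, 7)],
     .combine 8 [(1, 27), (2, 28)],
     .combine 8 [(1, 29), (2, 30)],
     .combine 16 [(1, 18), (2, 17), (2, 31), (3, 32)],
     .combine 8 [(2, 0), (2, 33), (1, 34)],
     .combine 12 [(1, 35), (2, 36)],
     .combine 8 [(1, 37), (2, 38)],
     .combine 4 [(1, 39)],
     .combine 8 [(1, 40), (2, 3)],
     .combine 14 [(1, 8), (2, 41)],
     .combine 48 [(2, 6), (2, 7), (9, 2), (8, 3), (3, 42)],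
     .combine 8 [(1, 43), (1, 44)],
     .combine 14 [(1, 15), (2, 45)],
     .combine 4 [(2, 46), (1, 38)],
     .combine 88 [(4, 17), (3, 47), (9, 43), (5, 48), (4, 49)],
     .combine 2 [(1, 50)],
     .combine 2 [(1, 51), (1, 46)],
     .combine 12 [(1, 52), (2, 36)],
     .combine 12 [(1, 53), (2, 43)],
     .combine 8 [(1, 54), (1, 55)],
     .combine 8 [(1, 56), (1, 41)],
     .combine 8 [(1, 57), (2, 28)],
     .combine 8 [(1, 58), (2, 30)],
     .combine 64 [(32, 1), (13, 2), (8, 41), (2, 59), (6, 56)],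
     .combine 8 [(1, 60), (1, 61)],
     .combine 8 [(1, 62), (1, 44)],
     .combine 8 [(1, 63), (1, 45)],
     .combine 96 [(48, 1), (19, 14), (12, 44), (3, 59), (9, 63)],
     .combine 8 [(2, 14), (1, 25), (4, 24), (3, 64)],
     .combine 8 [(1, 65), (1, 6)],
     .combine 4 [(1, 66)],
     .combine 3 [(1, 67)],
     .combine 13 [(1, 68), (2, 55)],
     .combine 3 [(1, 69)],
     .combine 6 [(2, 70), (1, 55)],
     .combine 4 [(1, 71)],
     .combine 6 [(2, 72), (1, 41)],
     .combine 3 [(1, 73)],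
     .combine 13 [(1, 74), (2, 75)],
     .combine 6 [(2, 76), (1, 75)],
     .combine 208 [(15, 2), (8, 18), (36, 3), (16, 30), (13, 43), (13, 77)],
     .combine 8 [(1, 32), (2, 66)],
     .combine 64 [(8, 6), (12, 18), (4, 66), (3, 74), (4, 78)],
     .combine 64 [(8, 6), (13, 18), (4, 75), (1, 74), (3, 68), (4, 78)],
     .combine 13 [(1, 79), (2, 61)],
     .combine 3 [(1, 80)],
     .combine 6 [(2, 81), (1, 61)],
     .combine 4 [(1, 82)],
     .combine 3 [(1, 83)],
     .combine 6 [(2, 84), (1, 44)],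
     .combine 6 [(2, 85), (1, 45)],
     .combine 256 [(16, 47), (13, 86), (3, 87), (9, 88), (7, 89)],
     .combine 4 [(1, 90)],
     .combine 4 [(1, 91)],
     .combine 4 [(1, 92)],
     .combine 3 [(1, 93)],
     .combine 3 [(1, 94)],
     .combine 4 [(1, 11)],
     .combine 4 [(1, 95), (1, 33)],
     .combine 3 [(2, 96), (1, 38)],
     .combine 4 [(1, 97), (1, 38)],
     .combine 4 [(2, 19), (1, 17)],
     .combine 4 [(1, 98), (1, 38)],
     .combine 4 [(2, 22), (1, 21)],
     .combine 4 [(1, 99), (1, 38)],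
     .combine 88 [(44, 1), (16, 2), (17, 3), (1, 18), (5, 28)],
     .combine 4 [(2, 1), (1, 18), (2, 19), (2, 20)],
     .combine 32 [(16, 1), (4, 3), (4, 18), (2, 75), (1, 100), (3, 101)],
     .combine 31 [(4, 17), (6, 18), (4, 75), (1, 100), (2, 101)],
     .combine 4 [(2, 1), (1, 2), (2, 22), (2, 23)],
     .combine 4 [(2, 1), (1, 14), (2, 24), (2, 64)],
     .combine 144 [(36, 102), (7, 86), (9, 103), (5, 104)],
     .combine 240 [(30, 6), (15, 100), (23, 5), (14, 104)],
     .combine 8 [(1, 105), (1, 17)],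
     .combine 8 [(1, 106), (1, 17)],
     .combine 8 [(1, 107), (1, 21)],
     .combine 18 [(2, 17), (1, 107), (1, 105), (2, 108)],
     .combine 160 [(20, 17), (4, 59), (10, 107), (7, 105)],
     .combine 8 [(1, 109), (1, 6)],
     .combine 8 [(1, 110), (1, 7)],
     .combine 8 [(1, 111), (2, 10)],
     .combine 95 [(6, 17), (3, 47), (4, 111), (4, 112), (4, 113)],
     .combine 8 [(1, 114), (2, 0)],
     .combine 224 [(28, 6), (13, 100), (12, 115), (4, 116)],
     .combine 8 [(1, 103), (2, 0)],
     .combine 224 [(28, 7), (13, 59), (4, 117), (12, 118)],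
     .combine 81 [(20, 102), (4, 86), (5, 103), (3, 87)],
     .combine 15152 [(379, 47), (842, 59), (443, 86), (568, 119), (184, 117), (326, 120),
       (296, 121), (872, 122)]]
  indices :=
    [22, 16, 2, 2, 17, 2, 39, 2, 2, 44, 72, 18, 9, 10, 10, 10, 70, 38, 9, 11, 2, 1, 1, 6, 51, 6,
     52, 9, 7, 3, 66, 9, 7, 3, 0, 0, 0, 5, 0, 0, 20, 0, 21, 37, 5, 2, 0, 0, 0, 2, 16, 16, 40, 16,
     70, 16, 44, 25, 16, 17, 17, 39, 41, 42, 43, 44, 39, 18, 72, 44, 4, 45, 56, 46, 16, 10, 10, 50,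
     47, 12, 48, 44, 11, 11, 39, 49, 19, 19, 50, 51, 12, 52, 66, 53, 4, 3, 54, 55, 4, 3, 0, 0, 20,
     0, 21, 13, 5, 0, 56, 57, 58, 13, 59, 13, 5, 16, 44, 39, 2, 0, 0, 38, 0, 9, 4, 60, 15, 22, 16,
     70, 61, 44, 39, 26, 72, 62, 56, 50, 27, 66, 14, 50, 23, 0, 63, 15, 24, 22, 25, 24, 64, 24, 14,
     39, 26, 24, 65, 12, 27, 66, 14, 67, 23, 24, 68, 15, 15, 69, 61, 70, 70, 15, 71, 2, 1, 1, 75,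
     28, 70, 28, 62, 78, 29, 72, 72, 72, 29, 15, 73, 15, 30, 30, 75, 76, 70, 77, 9, 31, 31, 74, 74,
     1, 1, 75, 76, 6, 77, 78, 33, 78, 32, 72, 33, 7, 32, 0, 0, 34, 0, 35, 79, 36, 0, 8, 8, 34, 8,
     35, 37, 36, 2, 9, 89, 2, 0, 0, 38, 0, 9, 80, 81, 24, 15, 16, 24, 24, 82, 24, 24, 83, 24, 84,
     85, 86, 24, 24, 87, 24, 88, 89, 90, 0, 15, 91, 92, 93, 94, 95, 96]

theorem fiberRoot_lemkeL_1 : FiberRoot lemkeL 1 8 85 :=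
  Certificate.fiberRoot (C := lemkeLCertificate1) (by decide +kernel)

def lemkeL1Certificate1 : Certificate 8 where
  tokens :=
    [[], [(3, 1)], [(2, 1)], [(0, 1)], [(3, 1), (7, 3)], [(3, 1), (4, 3)], [(2, 1), (6, 2)],
     [(2, 1), (5, 2)], [(2, 1), (4, 2)], [(3, 1), (7, 3), (7, 3)], [(2, 1), (6, 2), (6, 2)],
     [(2, 1), (6, 2), (5, 2)], [(2, 1), (5, 2), (5, 2)], [(3, 1), (7, 3), (4, 3)],
     [(2, 1), (6, 2), (4, 2)], [(2, 1), (5, 2), (4, 2)], [(2, 1), (4, 2), (4, 2)],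
     [(3, 1), (7, 3), (6, 7)], [(3, 1), (7, 3), (5, 7)], [(2, 1), (6, 2), (7, 6)],
     [(2, 1), (5, 2), (7, 5)], [(2, 1), (4, 2), (7, 4)], [(3, 1), (7, 3), (7, 3), (6, 7)],
     [(2, 1), (6, 2), (7, 6), (6, 2)], [(2, 1), (5, 2), (7, 5), (6, 2)],
     [(3, 1), (7, 3), (7, 3), (5, 7)], [(2, 1), (6, 2), (7, 6), (5, 2)],
     [(2, 1), (5, 2), (7, 5), (5, 2)], [(2, 1), (4, 2), (7, 4), (6, 2)],
     [(2, 1), (4, 2), (7, 4), (5, 2)]]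
  plans :=
    [⟨[], [], [(0, 1)]⟩, ⟨[(3, 1), (4, 3)], [], [(7, 3), (7, 4), (6, 7)]⟩,
     ⟨[(2, 1), (6, 2)], [], [(6, 2)]⟩, ⟨[(0, 1)], [], [(2, 0), (6, 2)]⟩,
     ⟨[], [], [(0, 1), (2, 0), (6, 2)]⟩, ⟨[(2, 1), (6, 2), (5, 2)], [], [(7, 5), (6, 7)]⟩,
     ⟨[(3, 1), (4, 3)], [], [(3, 4), (7, 3), (6, 7)]⟩, ⟨[], [], [(3, 1), (7, 3), (6, 7)]⟩,
     ⟨[(2, 1), (5, 2)], [], [(5, 2)]⟩, ⟨[(3, 1), (4, 3)], [], [(7, 3), (7, 4), (5, 7)]⟩,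
     ⟨[(0, 1)], [], [(2, 0), (5, 2)]⟩, ⟨[], [], [(0, 1), (2, 0), (5, 2)]⟩,
     ⟨[(2, 1), (6, 2), (5, 2)], [], [(7, 6), (5, 7)]⟩, ⟨[(2, 1), (5, 2)], [], [(2, 5), (6, 2)]⟩,
     ⟨[(2, 1), (6, 2)], [], [(2, 6), (5, 2)]⟩, ⟨[(2, 1), (6, 2)], [], [(2, 6), (5, 2), (7, 5)]⟩,
     ⟨[], [], [(2, 1), (5, 2), (7, 5)]⟩, ⟨[], [], [(2, 1), (6, 2), (7, 6)]⟩,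
     ⟨[(3, 1), (7, 3), (5, 7)], [], [(7, 3), (7, 5), (6, 7)]⟩,
     ⟨[(0, 1)], [], [(2, 0), (6, 2), (7, 6), (5, 7)]⟩, ⟨[(3, 1), (7, 3), (6, 7)], [], [(6, 7)]⟩,
     ⟨[(3, 1), (7, 3), (5, 7)], [], [(2, 5), (6, 2), (7, 6), (3, 7)]⟩,
     ⟨[(0, 1)], [], [(2, 0), (6, 2), (7, 6), (3, 7)]⟩,
     ⟨[(3, 1), (4, 3)], [], [(3, 4), (7, 3), (5, 7)]⟩, ⟨[], [], [(3, 1), (7, 3), (5, 7)]⟩,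
     ⟨[(2, 1), (6, 2), (7, 6)], [], [(6, 2), (7, 6)]⟩,
     ⟨[(2, 1), (5, 2), (7, 5)], [], [(5, 2), (7, 5)]⟩,
     ⟨[(2, 1), (4, 2), (7, 4)], [], [(4, 2), (7, 4)]⟩, ⟨[], [], [(3, 1), (7, 3), (4, 7)]⟩,
     ⟨[(2, 1), (4, 2), (7, 4)], [], [(5, 2), (7, 5), (4, 7)]⟩,
     ⟨[(0, 1)], [], [(2, 0), (5, 2), (7, 5), (6, 7)]⟩,
     ⟨[(2, 1), (6, 2), (5, 2)], [], [(7, 5), (7, 6), (4, 7)]⟩,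
     ⟨[(2, 1), (5, 2)], [], [(5, 2), (7, 5), (6, 7)]⟩,
     ⟨[(3, 1), (4, 3)], [], [(4, 3), (7, 4), (6, 7)]⟩,
     ⟨[(2, 1), (4, 2)], [], [(4, 2), (7, 4), (6, 7)]⟩, ⟨[], [], [(3, 1), (4, 3)]⟩,
     ⟨[(0, 1)], [], [(2, 0), (4, 2)]⟩, ⟨[(2, 1), (6, 2)], [], [(2, 6), (4, 2)]⟩,
     ⟨[(3, 1), (7, 3), (5, 7)], [], [(4, 3), (7, 5), (4, 7)]⟩, ⟨[], [], [(2, 1), (4, 2), (7, 4)]⟩,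
     ⟨[(3, 1), (7, 3), (6, 7)], [], [(7, 6), (5, 7)]⟩, ⟨[(3, 1), (7, 3), (5, 7)], [], [(5, 7)]⟩,
     ⟨[(3, 1)], [], [(4, 3)]⟩, ⟨[(3, 1), (4, 3)], [], [(4, 3), (7, 4), (5, 7)]⟩,
     ⟨[(2, 1), (4, 2)], [], [(4, 2), (7, 4), (5, 7)]⟩, ⟨[(3, 1), (4, 3)], [], [(2, 4), (6, 2)]⟩,
     ⟨[(3, 1)], [], [(4, 3), (7, 4), (5, 7)]⟩,
     ⟨[(2, 1), (4, 2), (7, 4)], [], [(6, 2), (7, 6), (4, 7)]⟩,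
     ⟨[(2, 1), (6, 2)], [], [(4, 2), (7, 4), (7, 6), (5, 7)]⟩,
     ⟨[(3, 1), (7, 3), (6, 7)], [], [(4, 3), (4, 7)]⟩,
     ⟨[(2, 1), (6, 2)], [], [(6, 2), (7, 6), (4, 7)]⟩,
     ⟨[(2, 1), (5, 2)], [], [(5, 2), (7, 5), (4, 7)]⟩,
     ⟨[(3, 1), (7, 3), (5, 7)], [], [(4, 3), (4, 7)]⟩,
     ⟨[(0, 1)], [], [(2, 0), (4, 2), (7, 4), (5, 7)]⟩,
     ⟨[(3, 1), (7, 3), (5, 7)], [], [(7, 5), (6, 7)]⟩, ⟨[], [], [(3, 1), (4, 3), (7, 4), (5, 7)]⟩,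
     ⟨[(0, 1)], [], [(2, 0), (4, 2), (7, 4)]⟩,
     ⟨[(2, 1), (4, 2)], [], [(7, 4), (5, 7), (2, 5), (0, 2)]⟩,
     ⟨[(3, 1)], [], [(4, 3), (7, 4), (6, 7)]⟩, ⟨[(3, 1), (4, 3)], [], [(2, 4), (5, 2)]⟩,
     ⟨[], [], [(3, 1), (4, 3), (2, 4), (5, 2)]⟩, ⟨[(0, 1)], [], [(2, 0), (4, 2), (3, 4)]⟩,
     ⟨[(3, 1)], [], [(7, 3), (4, 7), (2, 4), (0, 2)]⟩,
     ⟨[(3, 1), (4, 3)], [], [(2, 4), (5, 2), (7, 5), (6, 7)]⟩,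
     ⟨[(2, 1), (5, 2)], [], [(7, 5), (3, 7), (4, 3), (2, 4)]⟩,
     ⟨[(2, 1), (6, 2)], [], [(7, 6), (3, 7), (4, 3), (2, 4)]⟩,
     ⟨[], [(0, 1), (0, 1)], [(3, 1), (4, 3)]⟩, ⟨[(2, 1), (6, 2)], [], [(4, 2), (3, 4)]⟩,
     ⟨[(2, 1), (5, 2)], [], [(4, 2), (3, 4)]⟩]
  refutations :=
    [.combine 2 [(1, 0)],
     .combine 8 [(2, 1), (2, 2), (1, 3), (1, 4), (2, 5)],
     .combine 8 [(1, 6), (1, 7)],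
     .combine 8 [(2, 8), (2, 9), (1, 10), (1, 11), (2, 12)],
     .combine 10 [(5, 0), (2, 13), (2, 14)],
     .combine 8 [(1, 15), (1, 16)],
     .combine 16 [(2, 17), (4, 18), (1, 19)],
     .combine 8 [(4, 0), (1, 2), (1, 3), (2, 13), (4, 20)],
     .combine 16 [(2, 7), (1, 21), (1, 22)],
     .combine 8 [(1, 23), (1, 24)],
     .combine 4 [(1, 25), (1, 7)],
     .combine 4 [(1, 26), (1, 24)],
     .combine 4 [(1, 27), (1, 28)],
     .combine 8 [(1, 29), (2, 9)],
     .combine 139 [(42, 0), (7, 24), (28, 1), (6, 30), (27, 31)],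
     .combine 32 [(16, 0), (8, 9), (4, 10), (3, 32), (7, 12)],
     .combine 8 [(1, 33), (1, 34)],
     .combine 4 [(1, 35), (1, 36), (1, 37), (1, 38)],
     .combine 8 [(2, 36), (1, 39)],
     .combine 8 [(4, 0), (3, 8), (1, 10), (2, 40), (2, 41)],
     .combine 4 [(1, 35), (1, 8), (1, 42), (1, 10)],
     .combine 8 [(1, 43), (1, 44)],
     .combine 72 [(4, 17), (5, 24), (12, 45), (4, 21), (6, 46)],
     .combine 8 [(1, 47), (2, 1)],
     .combine 32 [(16, 0), (5, 1), (7, 18), (1, 19), (3, 48)],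
     .combine 8 [(4, 0), (1, 2), (2, 13), (1, 3), (4, 49)],
     .combine 128 [(64, 0), (29, 1), (16, 3), (12, 50), (32, 5)],
     .combine 32 [(4, 51), (7, 9)],
     .combine 8 [(4, 0), (1, 8), (1, 10), (2, 14), (4, 52)],
     .combine 32 [(16, 0), (4, 43), (3, 34), (7, 31), (1, 53)],
     .combine 96 [(8, 42), (20, 40), (8, 23), (6, 30), (9, 54), (6, 55)],
     .combine 8 [(1, 56), (1, 17)],
     .combine 8 [(1, 16), (2, 10)],
     .combine 120 [(15, 17), (11, 13), (18, 14), (7, 30), (8, 57)],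
     .combine 16 [(2, 17), (2, 45), (2, 58), (1, 22)],
     .combine 16 [(2, 16), (1, 59), (2, 46), (1, 53)],
     .combine 192 [(36, 42), (31, 13), (40, 14), (15, 59), (12, 60), (24, 61)],
     .combine 22040 [(55, 17), (1365, 30), (60, 55), (1290, 60), (201, 62), (739, 63), (767, 64),
       (1239, 65)],
     .split 0 10
       (.combine 4 [(1, 42), (1, 35)])
       (.combine 16 [(4, 3), (3, 13), (4, 42), (2, 40), (4, 66)]),
     .split 0 10
       (.combine 8 [(2, 35), (1, 42), (2, 54), (2, 67)])
       (.combine 24 [(6, 3), (5, 42), (6, 54), (2, 67), (2, 45), (6, 66), (6, 20)]),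
     .split 0 10
       (.combine 8 [(4, 2), (1, 6), (1, 7), (2, 54)])
       (.combine 32 [(8, 3), (8, 13), (3, 6), (13, 20), (8, 66)]),
     .split 0 10
       (.combine 8 [(2, 35), (1, 42), (2, 40), (2, 68)])
       (.combine 24 [(5, 42), (6, 40), (6, 10), (2, 59), (6, 66), (2, 68), (6, 41)]),
     .split 0 10
       (.combine 8 [(1, 24), (4, 8), (2, 40), (1, 23)])
       (.combine 32 [(8, 8), (8, 40), (8, 10), (3, 23), (8, 66), (5, 41)])]
  indices :=
    [2, 10, 6, 9, 5, 10, 5, 4, 6, 11, 5, 5, 4, 5, 12, 2, 2, 2, 2, 1, 9, 9, 2, 13, 13, 4, 1, 1, 1,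
     9, 4, 27, 9, 27, 3, 3, 2, 9, 17, 16, 18, 17, 16, 17, 21, 17, 16, 2, 2, 4, 7, 4, 9, 19, 2, 39,
     2, 9, 38, 2, 39, 40, 20, 41, 9, 42, 5, 5, 2, 5, 4, 5, 2, 5, 4, 5, 12, 38, 2, 20, 9, 36, 22, 0,
     0, 10, 0, 10, 0, 1, 0, 11, 0, 6, 6, 0, 6, 1, 6, 0, 11, 0, 15, 0, 32, 3, 3, 0, 12, 0, 23, 23, 0,
     26, 1, 1, 0, 13, 13, 0, 14, 14, 24, 25, 26, 1, 1, 0, 27, 28, 15, 3, 3, 3, 3, 0, 0, 16, 0, 21,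
     17, 29, 0, 18, 17, 16, 17, 21, 17, 29, 0, 0, 7, 0, 0, 8, 7, 7, 0, 19, 19, 19, 0, 0, 2, 39, 40,
     0, 9, 38, 30, 39, 40, 20, 41, 42, 42, 0, 31, 0, 0, 0, 5, 0, 0, 18, 0, 18, 4, 33, 0, 0, 8, 0,
     32, 4, 8, 0, 18, 38, 34, 20, 35, 36, 37]

theorem fiberRoot_lemkeL1_1 : FiberRoot lemkeL1 1 8 85 :=
  Certificate.fiberRoot (C := lemkeL1Certificate1) (by decide +kernel)

def lemkeL1Certificate5 : Certificate 8 where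
  tokens :=
    [[], [(7, 5)], [(2, 5)], [(7, 5), (6, 7)], [(7, 5), (4, 7)], [(7, 5), (3, 7)],
     [(2, 5), (6, 2)], [(2, 5), (4, 2)], [(2, 5), (1, 2)], [(2, 5), (0, 2)],
     [(2, 5), (6, 2), (6, 2)], [(2, 5), (6, 2), (4, 2)], [(2, 5), (4, 2), (4, 2)],
     [(7, 5), (6, 7), (3, 7)], [(7, 5), (4, 7), (3, 7)], [(7, 5), (3, 7), (3, 7)],
     [(2, 5), (4, 2), (3, 4)], [(2, 5), (1, 2), (3, 1)], [(2, 5), (6, 2), (1, 2)],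
     [(2, 5), (4, 2), (1, 2)], [(7, 5), (3, 7), (1, 3)], [(2, 5), (1, 2), (1, 2)],
     [(2, 5), (6, 2), (0, 2)], [(2, 5), (4, 2), (0, 2)], [(2, 5), (1, 2), (0, 2)],
     [(2, 5), (0, 2), (0, 2)], [(2, 5), (4, 2), (3, 4), (1, 2)], [(7, 5), (3, 7), (3, 7), (1, 3)],
     [(2, 5), (1, 2), (3, 1), (1, 2)], [(2, 5), (4, 2), (3, 4), (0, 2)],
     [(7, 5), (3, 7), (1, 3), (0, 1)], [(2, 5), (1, 2), (3, 1), (0, 2)]]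
  plans :=
    [⟨[], [], [(2, 5), (0, 2)]⟩, ⟨[], [], [(7, 5), (6, 7)]⟩, ⟨[(2, 5), (6, 2)], [], [(6, 2)]⟩,
     ⟨[(7, 5), (3, 7)], [], [(4, 3), (7, 4), (6, 7)]⟩, ⟨[(7, 5), (4, 7)], [], [(7, 4), (6, 7)]⟩,
     ⟨[(7, 5), (4, 7)], [], [(3, 4), (3, 7), (1, 3), (0, 1)]⟩,
     ⟨[(2, 5), (0, 2)], [], [(1, 0), (1, 2)]⟩, ⟨[(2, 5), (1, 2), (0, 2)], [], [(1, 0)]⟩,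
     ⟨[], [], [(2, 5), (1, 2), (0, 1)]⟩, ⟨[], [], [(7, 5), (3, 7), (1, 3), (0, 1)]⟩,
     ⟨[(2, 5), (0, 2)], [], [(1, 0), (1, 2), (3, 1)]⟩,
     ⟨[(7, 5), (3, 7)], [], [(3, 7), (1, 3), (0, 1)]⟩, ⟨[], [], [(2, 5), (4, 2), (3, 4)]⟩,
     ⟨[(2, 5), (6, 2)], [], [(2, 6), (4, 2), (3, 4)]⟩,
     ⟨[(7, 5), (4, 7)], [], [(4, 7), (3, 4), (1, 3)]⟩,
     ⟨[(2, 5), (4, 2), (0, 2)], [], [(1, 0), (3, 1), (4, 3)]⟩,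
     ⟨[(7, 5), (3, 7), (1, 3)], [], [(3, 1), (3, 7), (4, 3)]⟩, ⟨[(2, 5), (0, 2)], [], [(0, 2)]⟩,
     ⟨[(2, 5), (1, 2), (0, 2)], [], [(0, 1)]⟩,
     ⟨[(7, 5), (3, 7), (1, 3), (0, 1)], [], [(3, 7), (1, 3), (0, 1)]⟩, ⟨[], [], [(7, 5), (3, 7)]⟩,
     ⟨[(7, 5), (3, 7)], [], [(3, 7)]⟩, ⟨[(2, 5), (1, 2), (3, 1)], [], [(0, 1), (0, 2)]⟩,
     ⟨[(7, 5), (3, 7), (1, 3), (0, 1)], [], [(0, 1)]⟩,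
     ⟨[(7, 5), (4, 7)], [], [(3, 4), (3, 7), (1, 3)]⟩,
     ⟨[(2, 5), (1, 2)], [], [(1, 2), (3, 1), (4, 3)]⟩, ⟨[], [], [(2, 5), (1, 2), (3, 1)]⟩,
     ⟨[(7, 5), (4, 7)], [], [(7, 4), (6, 7), (2, 6), (0, 2)]⟩,
     ⟨[(7, 5), (3, 7), (1, 3), (0, 1)], [], [(1, 3), (0, 1)]⟩,
     ⟨[(2, 5), (4, 2), (3, 4), (0, 2)], [], [(1, 0), (3, 1), (4, 3)]⟩,
     ⟨[(2, 5), (4, 2), (3, 4)], [], [(1, 2), (3, 1), (4, 3)]⟩,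
     ⟨[(2, 5), (0, 2)], [], [(1, 0), (2, 1), (6, 2)]⟩, ⟨[], [], [(7, 5), (4, 7)]⟩,
     ⟨[(2, 5), (6, 2)], [], [(2, 6), (0, 2)]⟩,
     ⟨[(2, 5), (4, 2), (3, 4)], [], [(4, 3), (2, 4), (0, 2)]⟩,
     ⟨[(2, 5), (4, 2), (0, 2)], [], [(3, 4), (1, 3), (0, 1)]⟩,
     ⟨[(7, 5)], [], [(4, 7), (2, 4), (1, 2)]⟩, ⟨[], [], [(2, 5), (1, 2)]⟩,
     ⟨[(7, 5)], [], [(6, 7), (2, 6), (1, 2)]⟩, ⟨[(2, 5), (1, 2)], [], [(1, 2)]⟩,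
     ⟨[(7, 5), (3, 7), (1, 3)], [], [(4, 3), (7, 4), (6, 7)]⟩,
     ⟨[(2, 5), (6, 2)], [], [(2, 6), (1, 2), (3, 1)]⟩,
     ⟨[(2, 5), (4, 2), (3, 4)], [], [(4, 2), (4, 3)]⟩,
     ⟨[(2, 5), (4, 2), (3, 4)], [], [(4, 2), (3, 4)]⟩, ⟨[(2, 5), (4, 2)], [], [(4, 2)]⟩,
     ⟨[(7, 5), (3, 7), (1, 3)], [], [(3, 1), (4, 3), (4, 7)]⟩,
     ⟨[(2, 5), (4, 2), (0, 2)], [], [(1, 0)]⟩, ⟨[(2, 5), (6, 2)], [], [(2, 6), (4, 2)]⟩,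
     ⟨[(7, 5), (3, 7)], [], [(7, 3), (6, 7)]⟩, ⟨[(2, 5), (1, 2)], [], [(4, 2), (7, 4), (6, 7)]⟩,
     ⟨[(7, 5), (3, 7), (1, 3)], [], [(3, 7), (1, 3), (0, 1)]⟩,
     ⟨[(7, 5), (6, 7)], [], [(4, 7), (3, 4), (1, 3)]⟩,
     ⟨[(2, 5), (6, 2)], [], [(1, 2), (3, 1), (4, 3)]⟩, ⟨[], [], [(2, 5), (6, 2)]⟩,
     ⟨[(2, 5), (1, 2)], [], [(3, 1), (7, 3), (6, 7), (2, 6)]⟩,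
     ⟨[(7, 5), (4, 7)], [], [(2, 4), (1, 2), (3, 1), (7, 3)]⟩,
     ⟨[(2, 5), (4, 2), (3, 4), (1, 2)], [], [(3, 4), (1, 3)]⟩,
     ⟨[(2, 5), (1, 2), (3, 1)], [], [(1, 2), (3, 1)]⟩,
     ⟨[(2, 5), (6, 2), (0, 2)], [], [(1, 0), (3, 1), (4, 3)]⟩,
     ⟨[(2, 5), (0, 2)], [], [(2, 0), (4, 2), (3, 4)]⟩,
     ⟨[(2, 5), (0, 2)], [], [(2, 0), (4, 2), (7, 4), (6, 7)]⟩,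
     ⟨[(7, 5)], [], [(3, 7), (4, 3), (2, 4), (0, 2)]⟩,
     ⟨[(2, 5), (1, 2), (3, 1)], [], [(0, 1), (2, 0), (6, 2)]⟩,
     ⟨[(2, 5), (6, 2)], [], [(0, 2), (1, 0)]⟩, ⟨[(7, 5), (6, 7)], [], [(3, 7), (1, 3), (0, 1)]⟩,
     ⟨[(7, 5), (3, 7), (1, 3), (0, 1)], [], [(1, 0), (3, 1), (4, 3), (7, 4)]⟩,
     ⟨[(7, 5), (3, 7), (1, 3)], [], [(3, 1), (4, 3), (7, 4), (6, 7)]⟩,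
     ⟨[(2, 5), (6, 2), (4, 2)], [], [(3, 4), (1, 3), (0, 1)]⟩, ⟨[(7, 5), (6, 7)], [], [(6, 7)]⟩,
     ⟨[(7, 5), (4, 7)], [], [(3, 4), (1, 3), (0, 1), (2, 0)]⟩,
     ⟨[(7, 5), (3, 7), (1, 3), (0, 1)], [], [(2, 0), (1, 2), (3, 1), (7, 3)]⟩,
     ⟨[(2, 5), (0, 2)], [], [(1, 0), (3, 1), (4, 3), (2, 4)]⟩,
     ⟨[(2, 5), (4, 2)], [], [(2, 4), (0, 2), (1, 0)]⟩,
     ⟨[(2, 5), (1, 2)], [], [(0, 1), (2, 0), (4, 2), (3, 4)]⟩,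
     ⟨[], [], [(2, 5), (0, 2), (1, 0), (3, 1)]⟩,
     ⟨[(7, 5), (6, 7)], [], [(2, 6), (0, 2), (1, 0), (3, 1)]⟩,
     ⟨[(2, 5), (4, 2), (3, 4), (0, 2)], [], [(1, 0), (1, 3)]⟩,
     ⟨[(2, 5), (1, 2), (0, 2)], [], [(1, 0), (3, 1), (4, 3)]⟩,
     ⟨[(2, 5), (1, 2)], [], [(4, 2), (3, 4), (1, 3), (0, 1)]⟩,
     ⟨[(7, 5), (3, 7), (1, 3)], [], [(4, 7), (3, 4), (1, 3), (0, 1)]⟩,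
     ⟨[(7, 5), (4, 7)], [], [(7, 4), (6, 7), (2, 6), (1, 2)]⟩,
     ⟨[(2, 5), (0, 2)], [], [(4, 2), (7, 4), (6, 7)]⟩,
     ⟨[(7, 5), (3, 7), (1, 3), (0, 1)], [], [(3, 1), (3, 7), (4, 3)]⟩,
     ⟨[(2, 5), (4, 2), (3, 4), (0, 2)], [], [(4, 3)]⟩,
     ⟨[(2, 5), (0, 2)], [], [(6, 2), (7, 6), (3, 7)]⟩,
     ⟨[(7, 5), (3, 7), (1, 3), (0, 1)], [], [(3, 1), (4, 3), (7, 4)]⟩,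
     ⟨[(2, 5), (1, 2), (3, 1), (0, 2)], [], [(3, 1)]⟩,
     ⟨[(7, 5), (3, 7), (1, 3), (0, 1)], [], [(4, 3), (7, 4), (6, 7)]⟩,
     ⟨[(2, 5), (1, 2), (3, 1), (0, 2)], [], [(0, 1)]⟩,
     ⟨[(2, 5), (6, 2)], [], [(2, 6), (0, 2), (1, 0), (3, 1)]⟩,
     ⟨[(2, 5), (4, 2), (3, 4)], [], [(2, 4), (0, 2)]⟩,
     ⟨[(7, 5), (3, 7), (1, 3), (0, 1)], [], [(4, 3), (4, 7)]⟩,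
     ⟨[(7, 5), (3, 7), (1, 3), (0, 1)], [], [(4, 7), (3, 4), (1, 3), (0, 1)]⟩,
     ⟨[(2, 5), (0, 2)], [], [(1, 0), (1, 2), (3, 1), (4, 3)]⟩]
  refutations :=
    [.combine 4 [(1, 0)],
     .combine 8 [(2, 1), (4, 2), (1, 3), (1, 4)],
     .combine 8 [(1, 5), (2, 6), (1, 7), (1, 8)],
     .combine 16 [(1, 9), (4, 10), (2, 11)],
     .combine 40 [(5, 12), (5, 13), (3, 14), (5, 15), (4, 16)],
     .combine 8 [(2, 0), (2, 17), (3, 18), (1, 19)],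
     .combine 4 [(1, 20), (1, 21), (2, 22)],
     .combine 4 [(1, 20), (2, 17), (2, 23)],
     .combine 8 [(2, 24), (1, 25), (1, 26)],
     .combine 16 [(4, 1), (7, 17), (4, 18), (1, 27), (4, 28)],
     .combine 120 [(22, 20), (4, 12), (6, 13), (19, 24), (15, 29), (10, 30)],
     .combine 8 [(2, 1), (3, 2), (2, 4), (1, 31)],
     .combine 4 [(1, 32), (2, 17), (2, 18)],
     .split 1 3
       (.combine 12 [(3, 0), (1, 5), (3, 33), (1, 34)])
       (.combine 8 [(2, 0), (2, 33), (1, 19), (1, 35)]),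
     .combine 8 [(1, 36), (2, 37)],
     .combine 32 [(8, 1), (1, 38), (15, 39), (4, 40)],
     .combine 8 [(1, 41), (1, 26)],
     .combine 16 [(2, 13), (4, 32), (2, 15), (5, 42)],
     .combine 8 [(2, 20), (1, 13), (2, 21), (1, 43), (1, 29)],
     .combine 8 [(2, 32), (2, 44), (1, 45), (4, 46), (2, 47)],
     .combine 8 [(2, 1), (3, 2), (2, 48), (1, 31)],
     .combine 8 [(2, 1), (4, 7), (1, 40), (1, 49)],
     .combine 11 [(2, 50), (3, 10)],
     .combine 5 [(1, 51), (1, 52)],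
     .combine 8 [(1, 26), (4, 21)],
     .combine 144 [(36, 53), (14, 38), (6, 54), (9, 55)],
     .combine 3 [(1, 56), (1, 57)],
     .combine 4 [(2, 39), (1, 24)],
     .combine 32 [(8, 53), (8, 2), (7, 4), (6, 48), (4, 58)],
     .combine 8 [(1, 59), (1, 12)],
     .combine 200 [(50, 53), (16, 3), (12, 60), (9, 61)],
     .combine 8 [(1, 62), (2, 53)],
     .combine 8 [(2, 20), (1, 13), (2, 21), (1, 59)],
     .combine 4 [(1, 1), (1, 4), (2, 6)],
     .combine 4 [(1, 1), (1, 4), (1, 63)],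
     .combine 8 [(1, 64), (2, 63)],
     .combine 32 [(8, 1), (4, 4), (2, 3), (2, 65), (1, 66)],
     .combine 24 [(6, 53), (6, 2), (2, 58), (3, 64), (3, 67)],
     .combine 36 [(9, 53), (9, 2), (2, 3), (4, 58), (3, 67), (16, 68)],
     .combine 8 [(1, 31), (2, 53)],
     .combine 192 [(48, 53), (23, 38), (21, 31), (2, 54), (12, 69)],
     .combine 72 [(18, 53), (8, 38), (9, 31), (2, 54)],
     .combine 176 [(11, 9), (10, 38), (11, 69), (9, 70)],
     .combine 192 [(24, 12), (24, 13), (7, 71), (8, 72), (8, 73)],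
     .combine 3390 [(164, 9), (48, 74), (55, 54), (55, 69), (109, 61), (125, 71), (114, 55),
       (205, 75)],
     .combine 192 [(8, 5), (25, 76), (24, 26), (15, 77), (6, 78), (8, 79)],
     .combine 32 [(2, 9), (2, 38), (15, 6)],
     .combine 8 [(1, 5), (3, 7), (2, 39), (1, 8)],
     .combine 31 [(8, 1), (16, 7), (15, 39), (4, 40), (1, 80)],
     .combine 16 [(1, 9), (2, 10), (4, 7), (2, 41)],
     .combine 32 [(7, 24), (4, 41), (4, 26), (4, 77)],
     .combine 8 [(1, 81), (2, 1)],
     .combine 4 [(1, 0), (1, 33), (1, 82), (1, 83)],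
     .combine 40 [(10, 1), (2, 3), (5, 84), (5, 85)],
     .combine 16 [(8, 21), (1, 74), (4, 17), (7, 86)],
     .combine 8 [(2, 1), (4, 18), (1, 81), (1, 87)],
     .combine 31 [(8, 1), (15, 17), (4, 3), (1, 27), (16, 23)],
     .combine 16 [(1, 9), (8, 17), (4, 21), (7, 88)],
     .combine 48 [(3, 9), (8, 11), (3, 89), (10, 88), (12, 90)],
     .combine 4 [(1, 0), (2, 18), (1, 33), (2, 91)],
     .combine 128 [(26, 18), (32, 33), (8, 74), (14, 19), (15, 35), (1, 92)],
     .split 5 6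
       (.combine 192 [(2, 9), (22, 5), (24, 76), (18, 41), (15, 93)])
       (.combine 16 [(2, 9), (3, 76), (2, 74)])]
  indices :=
    [34, 19, 1, 1, 34, 1, 17, 29, 17, 24, 16, 24, 18, 51, 1, 29, 29, 1, 31, 16, 16, 39, 33, 34, 34,
     19, 19, 19, 16, 16, 1, 27, 16, 1, 23, 1, 27, 4, 4, 4, 16, 24, 10, 24, 24, 24, 10, 14, 14, 14,
     14, 14, 16, 16, 14, 14, 16, 25, 14, 27, 27, 21, 16, 24, 8, 24, 26, 14, 27, 15, 14, 14, 27, 15,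
     16, 16, 27, 8, 39, 33, 39, 1, 19, 17, 19, 7, 39, 1, 29, 29, 1, 28, 1, 29, 17, 29, 17, 24, 24,
     18, 24, 6, 6, 18, 0, 0, 0, 11, 0, 0, 20, 0, 29, 29, 30, 0, 31, 24, 32, 33, 35, 39, 12, 33, 33,
     34, 11, 2, 19, 19, 19, 22, 16, 3, 35, 20, 27, 3, 61, 36, 37, 38, 4, 4, 4, 4, 24, 3, 3, 10, 24,
     3, 3, 10, 0, 0, 39, 0, 14, 39, 40, 0, 3, 16, 41, 29, 42, 43, 44, 14, 46, 21, 27, 2, 2, 21, 22,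
     22, 22, 45, 22, 22, 27, 46, 46, 46, 27, 2, 47, 48, 22, 49, 8, 50, 0, 0, 0, 51, 0, 0, 7, 0, 7,
     52, 53, 0, 6, 6, 54, 0, 0, 55, 0, 12, 59, 55, 0, 5, 5, 60, 0, 0, 9, 0, 12, 13, 9, 0, 7, 13, 7,
     13, 7, 13, 56, 6, 57, 6, 58, 0, 5, 12, 9, 12, 12, 59, 9, 12, 5, 5, 60]

theorem fiberRoot_lemkeL1_5 : FiberRoot lemkeL1 5 8 85 :=
  Certificate.fiberRoot (C := lemkeL1Certificate5) (by decide +kernel)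

end Certificates

section LemkeRoots

theorem lemkeCore_le_lemkeL : lemkeCore ≤ lemkeL := fun a b => by revert a b; decide

theorem lemkeCore_le_lemkeL1 : lemkeCore ≤ lemkeL1 := fun a b => by revert a b; decide

theorem lemkeCore_le_lemkeL2 : lemkeCore ≤ lemkeL2 := fun a b => by revert a b; decide

theorem fiberRoot_lemkeL : ∀ r, FiberRoot lemkeL r 8 85
  | 0 => fiberRoot_lemkeCore_0.of_le lemkeCore_le_lemkeL
  | 1 => fiberRoot_lemkeL_1
  | 2 => fiberRoot_lemkeCore_2.of_le lemkeCore_le_lemkeL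
  | 3 => fiberRoot_lemkeCore_3.of_le lemkeCore_le_lemkeL
  | 4 => fiberRoot_lemkeCore_4.of_le lemkeCore_le_lemkeL
  | 5 => fiberRoot_lemkeCore_4.of_equiv (Equiv.swap 4 5) (by decide)
  | 6 => fiberRoot_lemkeCore_4.of_equiv (Equiv.swap 4 6) (by decide)
  | 7 => fiberRoot_lemkeCore_7.of_le lemkeCore_le_lemkeL

theorem fiberRoot_lemkeL1 : ∀ r, FiberRoot lemkeL1 r 8 85
  | 0 => fiberRoot_lemkeCore_0.of_le lemkeCore_le_lemkeL1
  | 1 => fiberRoot_lemkeL1_1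
  | 2 => fiberRoot_lemkeCore_2.of_le lemkeCore_le_lemkeL1
  | 3 => fiberRoot_lemkeCore_3.of_le lemkeCore_le_lemkeL1
  | 4 => fiberRoot_lemkeCore_4.of_le lemkeCore_le_lemkeL1
  | 5 => fiberRoot_lemkeL1_5
  | 6 => fiberRoot_lemkeL1_5.of_equiv (Equiv.swap 5 6) (by decide)
  | 7 => fiberRoot_lemkeCore_7.of_le lemkeCore_le_lemkeL1

theorem fiberRoot_lemkeL2 : ∀ r, FiberRoot lemkeL2 r 8 85
  | 0 => fiberRoot_lemkeCore_0.of_le lemkeCore_le_lemkeL2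
  | 1 => fiberRoot_lemkeCore_0.of_equiv
      (Equiv.swap 0 1 * Equiv.swap 2 3 * Equiv.swap 5 7) (by decide)
  | 2 => fiberRoot_lemkeCore_2.of_le lemkeCore_le_lemkeL2
  | 3 => fiberRoot_lemkeCore_3.of_le lemkeCore_le_lemkeL2
  | 4 => fiberRoot_lemkeCore_4.of_le lemkeCore_le_lemkeL2
  | 5 => fiberRoot_lemkeCore_7.of_equiv
      (Equiv.swap 0 1 * Equiv.swap 2 3 * Equiv.swap 5 7) (by decide)
  | 6 => fiberRoot_lemkeCore_4.of_equiv (Equiv.swap 4 6) (by decide)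
  | 7 => fiberRoot_lemkeCore_7.of_le lemkeCore_le_lemkeL2

theorem fiberRoot_of_mem {G : SimpleGraph (Fin 8)}
    (hG : G ∈ ({lemkeL, lemkeL1, lemkeL2} : Set (SimpleGraph (Fin 8)))) (r : Fin 8) :
    FiberRoot G r 8 85 := by
  rcases hG with rfl | rfl | rfl
  · exact fiberRoot_lemkeL r
  · exact fiberRoot_lemkeL1 r
  · exact fiberRoot_lemkeL2 r

end LemkeRoots

end FiberPebbling

theorem stmt15_general {Y : Type*} [Fintype Y] {H : SimpleGraph Y}
    (hH : ∀ h, PebblingBound H h 8) {G : SimpleGraph (Fin 8)}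
    (hG : G ∈ ({lemkeL, lemkeL1, lemkeL2} : Set (SimpleGraph (Fin 8)))) :
    pebblingNumber (G □ H) ≤ 85 :=
  Nat.sInf_le fun c hc (r, h) => (FiberPebbling.fiberRoot_of_mem hG r).boxProd (hH h) c hc

/-- for all `G, H ∈ {L, L₁, L₂}`, `π(G □ H) ≤ 85`; in particular
`π(L □ L) ≤ 85`. -/
theorem stmt15 :
    ∀ G ∈ ({lemkeL, lemkeL1, lemkeL2} : Set (SimpleGraph (Fin 8))),
      ∀ H ∈ ({lemkeL, lemkeL1, lemkeL2} : Set (SimpleGraph (Fin 8))),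
        pebblingNumber (G.boxProd H) ≤ 85 :=
  fun _ hG _ hH => stmt15_general (fun h => (FiberPebbling.fiberRoot_of_mem.{0} hH h).bound) hG
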